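/- arXiv:1405.4037 — 4 statements merged into one kernel-verified Lean document; each statement's English description precedes it below -/
import Mathlib

section
/- Let k be a field of characteristic 0, K/k a field extension, G a finite group, and ρ : G → GL_n(K) a K-irreducible representation. Then ρ descends to an intermediate field k ⊆ K₀ ⊆ K whose transcendence degree over k is at most n²/4; that is, there exists an intermediate field K₀ with 4·trdeg_k(K₀) ≤ n² and a representation ρ' : G → GL_n(K₀) whose base change to K is K-equivalent to ρ. -/
open Matrix

/-- A matrix representation is irreducible (over the base field) if it is nonzero and the
only invariant subspaces are `⊥` and `⊤`. -/
def IsIrreducibleRep {K : Type*} [Field K] {G : Type*} [Group G] {n : ℕ}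
    (ρ : G →* GL (Fin n) K) : Prop :=
  0 < n ∧ ∀ W : Submodule K (Fin n → K),
    (∀ g : G, ∀ v ∈ W, (ρ g : Matrix (Fin n) (Fin n) K).mulVec v ∈ W) → W = ⊥ ∨ W = ⊤

/-- A representation `ρ : G → GL_n(K)` descends to an intermediate field `K₀` of `K/k` if
it is `K`-equivalent (conjugate) to the base change of some representation over `K₀`. -/
def Descends {k K : Type*} [Field k] [Field K] [Algebra k K] {G : Type*} [Group G] {n : ℕ}
    (ρ : G →* GL (Fin n) K) (K₀ : IntermediateField k K) : Prop :=
  ∃ ρ' : G →* GL (Fin n) K₀, ∃ M : GL (Fin n) K,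
    ∀ g, ρ g = M * Units.map ((algebraMap K₀ K).mapMatrix).toMonoidHom (ρ' g) * M⁻¹

/-- The transcendence degree of `K₀` over `k` is at most `n²/4`: every algebraically
independent (over `k`) finite subset `s` of `K₀` satisfies `4 * #s ≤ n²`. -/
def FourTrdegLE {k K : Type*} [Field k] [Field K] [Algebra k K]
    (K₀ : IntermediateField k K) (N : ℕ) : Prop :=
  ∀ s : Finset K₀,
    AlgebraicIndependent k (fun x : {y : K₀ // y ∈ s} => (x : K₀)) → 4 * s.card ≤ N

open Module

universe v

/-- Coordinates: a subspace of `ι → F` projects isomorphically to some coordinate subspace. -/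
lemma edi_exists_coords {F : Type*} {ι : Type v} [Field F] [Fintype ι] (W : Submodule F (ι → F)) :
    ∃ (κ : Type v) (_ : Fintype κ) (a : κ → ι) (e : W ≃ₗ[F] (κ → F)),
      Function.Injective a ∧ ∀ w c, e w c = (w : ι → F) (a c) := by
  classical
  let v : ι → Dual F W := fun i => (LinearMap.proj i).comp W.subtype
  obtain ⟨κ, a, ha, hsp, hli⟩ := exists_linearIndependent' F v
  have : Finite κ := Finite.of_injective a ha
  have : Fintype κ := Fintype.ofFinite κ
  let f : W →ₗ[F] (κ → F) := LinearMap.pi (fun c => v (a c))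
  have hf : Function.Injective f := by
    rw [injective_iff_map_eq_zero]
    intro w hw
    have h1 : Submodule.span F (Set.range (v ∘ a)) ≤ LinearMap.ker (Dual.eval F W w) := by
      rw [Submodule.span_le]
      rintro _ ⟨c, rfl⟩
      exact congrFun hw c
    rw [hsp] at h1
    ext i
    exact h1 (Submodule.subset_span ⟨i, rfl⟩)
  have hd : finrank F W = finrank F (κ → F) := by
    apply le_antisymm
    · exact LinearMap.finrank_le_finrank_of_injective hf
    · rw [finrank_pi, ← Subspace.dual_finrank_eq (K := F) (V := W)]
      exact hli.fintype_card_le_finrank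
  refine ⟨κ, inferInstance, a, LinearEquiv.ofBijective f ⟨hf, ?_⟩, ha, fun w c => rfl⟩
  exact (LinearMap.injective_iff_surjective_of_finrank_eq_finrank hd).1 hf

/-- Echelon form: a `w`-dimensional subspace of `F^m` is spanned by vectors whose entries are
`0`, `1` or one of at most `w (m - w)` parameters. -/
lemma edi_echelon {F ι : Type*} [Field F] [Fintype ι] (W : Submodule F (ι → F)) :
    ∃ (T : Set (ι → F)) (S : Finset F), Submodule.span F T = W ∧
      (∀ t ∈ T, ∀ i, t i = 0 ∨ t i = 1 ∨ t i ∈ S) ∧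
      S.card ≤ finrank F W * (Fintype.card ι - finrank F W) := by
  classical
  obtain ⟨κ, _, a, e, ha, he⟩ := edi_exists_coords W
  let b : κ → W := fun c => e.symm (Pi.single c 1)
  have hb : ∀ c c', (b c : ι → F) (a c') = (Pi.single c 1 : κ → F) c' := by
    intro c c'
    rw [← he]; simp [b]
  have hdim : finrank F W = Fintype.card κ := by rw [e.finrank_eq, finrank_pi]
  refine ⟨Set.range fun c => (b c : ι → F),
    (Finset.univ ×ˢ (Finset.univ.image a)ᶜ).image fun p => (b p.1 : ι → F) p.2, ?_, ?_, ?_⟩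
  · have h1 : Submodule.span F (Set.range b) = ⊤ := by
      have : Set.range b = e.symm '' Set.range (fun c => (Pi.single c 1 : κ → F)) := by
        rw [← Set.range_comp]; rfl
      rw [this, ← LinearEquiv.coe_coe, Submodule.span_image]
      have h2 := (Pi.basisFun F κ).span_eq
      have h3 : Set.range (fun c => (Pi.single c 1 : κ → F)) = Set.range (Pi.basisFun F κ) := by
        congr 1
      rw [h3, h2, Submodule.map_top, LinearEquiv.range]
    have : Set.range (fun c => (b c : ι → F)) = W.subtype '' Set.range b := by
      rw [← Set.range_comp]; rfl
    rw [this, Submodule.span_image, h1, Submodule.map_top, Submodule.range_subtype]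
  · rintro _ ⟨c, rfl⟩ i
    by_cases hi : ∃ c', a c' = i
    · obtain ⟨c', rfl⟩ := hi
      simp only [hb]
      by_cases h : c' = c
      · subst h; simp
      · simp [h]
    · right; right
      rw [Finset.mem_image]
      refine ⟨(c, i), ?_, rfl⟩
      simpa using hi
  · refine Finset.card_image_le.trans ?_
    rw [Finset.card_product, Finset.card_compl, Finset.card_image_of_injective _ ha, hdim]
    simp

/-- Wedderburn: matrix coefficients over an algebraically closed field, base-changed. -/
lemma edi_wedderburn (F Ω G : Type*) [Field F] [IsAlgClosed F] [CharZero F] [Field Ω]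
    [Algebra F Ω] [Group G] [Finite G] :
    ∃ (r : ℕ) (d : Fin r → ℕ) (σ : ∀ i, G → Matrix (Fin (d i)) (Fin (d i)) F),
      (∀ i g h, σ i (g * h) = σ i g * σ i h) ∧
      Submodule.span Ω (Set.range fun g : G => fun i => (σ i g).map (algebraMap F Ω)) = ⊤ ∧
      ∑ i, d i * d i = Nat.card G := by
  classical
  have : Fintype G := Fintype.ofFinite G
  have : NeZero (Nat.card G : F) := ⟨by
    rw [Nat.cast_ne_zero]; exact Nat.card_pos.ne'⟩
  have : IsSemisimpleRing (MonoidAlgebra F G) := inferInstance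
  have : FiniteDimensional F (MonoidAlgebra F G) :=
    inferInstance
  obtain ⟨r, d, -, ⟨Φ⟩⟩ :=
    IsSemisimpleRing.exists_algEquiv_pi_matrix_of_isAlgClosed F (MonoidAlgebra F G)
  refine ⟨r, d, fun i g => Φ (MonoidAlgebra.of F G g) i, ?_, ?_, ?_⟩
  · intro i g h
    simp only [map_mul, Pi.mul_apply]
  · set N := Submodule.span Ω (Set.range fun g : G => fun i =>
      (Φ (MonoidAlgebra.of F G g) i).map (algebraMap F Ω)) with hN
    have key : ∀ x : MonoidAlgebra F G, (fun i => (Φ x i).map (algebraMap F Ω)) ∈ N := by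
      intro x
      induction x using MonoidAlgebra.induction_on with
      | of g => exact Submodule.subset_span ⟨g, rfl⟩
      | add x y hx hy =>
        have := N.add_mem hx hy
        convert this using 1
        ext i a b
        simp
      | smul c x hx =>
        have := N.smul_mem (algebraMap F Ω c) hx
        convert this using 1
        ext i a b
        simp
    rw [eq_top_iff]
    rintro A -
    have hA : A = ∑ i, ∑ a, ∑ b, A i a b • (Pi.single i (Matrix.single a b (1 : Ω)) :
        ∀ i, Matrix (Fin (d i)) (Fin (d i)) Ω) := by
      conv_lhs => rw [← Finset.univ_sum_single A]
      refine Finset.sum_congr rfl fun i _ => ?_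
      conv_lhs => rw [Matrix.matrix_eq_sum_single (A i)]
      rw [← LinearMap.coe_single Ω, map_sum]
      refine Finset.sum_congr rfl fun a _ => ?_
      rw [map_sum]
      refine Finset.sum_congr rfl fun b _ => ?_
      rw [← map_smul, Matrix.smul_single, smul_eq_mul, mul_one]
    rw [hA]
    refine N.sum_mem fun i _ => N.sum_mem fun a _ => N.sum_mem fun b _ => N.smul_mem _ ?_
    have := key (Φ.symm (Pi.single i (Matrix.single a b 1)))
    rw [AlgEquiv.apply_symm_apply] at this
    convert this using 1
    ext j p q
    by_cases hj : j = i
    · subst hj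
      simp [Matrix.single_apply]
    · simp [hj]
  · have h1 := Φ.toLinearEquiv.finrank_eq
    rw [finrank_pi_fintype] at h1
    simp only [Module.finrank_matrix, Fintype.card_fin, Module.finrank_self, mul_one] at h1
    rw [← h1, Nat.card_eq_fintype_card]
    exact finrank_eq_card_basis (MonoidAlgebra.basis G F)

/-- A matrix over `F` containing an identity block whose column space is spanned by vectors
over a subfield `L` has entries in `L`. -/
lemma edi_entries_mem {F : Type*} [Field F] (L : Subfield F) {ι κ : Type*} [Fintype κ]
    [DecidableEq κ] (C : Matrix ι κ F) (a : κ → ι) (ha : ∀ c v, (C.mulVec v) (a c) = v c)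
    (T : Set (ι → F)) (hT : Submodule.span F T = LinearMap.range C.mulVecLin)
    (hL : ∀ t ∈ T, ∀ i, t i ∈ L) (i : ι) (c : κ) : C i c ∈ L := by
  let f : L →ₗ[L] F := Algebra.linearMap L F
  obtain ⟨π, hπ⟩ := f.exists_leftInverse_of_injective
    (LinearMap.ker_eq_bot.2 (algebraMap L F).injective)
  have hπ' : ∀ x ∈ L, (π x : F) = x := by
    intro x hx
    have := LinearMap.congr_fun hπ (⟨x, hx⟩ : L)
    exact congrArg Subtype.val this
  have hker : ∀ t ∈ T, ∑ c, (C i c - (π (C i c) : F)) * t (a c) = 0 := by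
    intro t ht
    have ht2 : t ∈ LinearMap.range C.mulVecLin := hT ▸ Submodule.subset_span ht
    obtain ⟨v, rfl⟩ := ht2
    have hv : ∀ c, (C.mulVecLin v) (a c) = v c := fun c => ha c v
    have hvL : ∀ c, v c ∈ L := fun c => by rw [← hv]; exact hL _ ht _
    simp only [hv]
    have h1 : ∑ c, C i c * v c = C.mulVecLin v i := rfl
    have h2 : ∑ c, (π (C i c) : F) * v c = C.mulVecLin v i := by
      rw [← hπ' _ (hL _ ht i), ← h1, map_sum, AddSubmonoidClass.coe_finsetSum]
      refine Finset.sum_congr rfl fun c _ => ?_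
      have : C i c * v c = (⟨v c, hvL c⟩ : L) • C i c := by
        rw [mul_comm]; rfl
      rw [this, map_smul, mul_comm]; rfl
    simp only [sub_mul, Finset.sum_sub_distrib, h1, h2, sub_self]
  let φ : (ι → F) →ₗ[F] F := ∑ c, (C i c - (π (C i c) : F)) • LinearMap.proj (a c)
  have hφ : LinearMap.range C.mulVecLin ≤ LinearMap.ker φ := by
    rw [← hT, Submodule.span_le]
    intro t ht
    simpa [φ] using hker t ht
  have h := hφ ⟨Pi.single c 1, rfl⟩
  have h2 : C i c - (π (C i c) : F) = 0 := by
    rw [LinearMap.mem_ker] at h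
    simp only [φ, LinearMap.sum_apply, LinearMap.smul_apply, LinearMap.proj_apply] at h
    have hv : ∀ c', (C.mulVecLin (Pi.single c 1)) (a c') = (Pi.single c 1 : κ → F) c' :=
      fun c' => ha c' _
    simp only [hv] at h
    simpa [Pi.single_apply] using h
  rw [sub_eq_zero.1 h2]
  exact (π (C i c)).2

/-- Elements algebraic over `k(S)`: independent sets have at most `#S` elements. -/
lemma edi_card_le {k Ω : Type*} [Field k] [Field Ω] [Algebra k Ω] (S : Finset Ω) (s : Finset Ω)
    (hs : ∀ x ∈ s, IsAlgebraic (IntermediateField.adjoin k (S : Set Ω)) x)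
    (hind : AlgebraicIndependent k (fun x : {y : Ω // y ∈ s} => (x : Ω))) : s.card ≤ S.card := by
  have h1 : (AlgebraicIndependent.matroid k Ω).Indep (s : Set Ω) := hind
  have h2 : (s : Set Ω) ⊆ (AlgebraicIndependent.matroid k Ω).closure S := by
    rw [AlgebraicIndependent.matroid_closure_eq]
    intro x hx
    have := hs x hx
    rw [SetLike.mem_coe, Subalgebra.mem_algebraicClosure]
    exact IntermediateField.isAlgebraic_adjoin_iff.1 this
  have h3 := h1.encard_le_eRk_of_subset h2
  rw [Matroid.eRk_closure_eq] at h3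
  have h4 := h3.trans (Matroid.eRk_le_encard _ _)
  simpa using h4

lemma edi_arith (w d : ℕ) : 4 * (w * (d - w)) ≤ (d * w) ^ 2 := by
  rcases Nat.eq_zero_or_pos w with rfl | hw
  · simp
  rcases le_total d w with h | h
  · simp [Nat.sub_eq_zero_of_le h]
  obtain ⟨e, rfl⟩ := Nat.exists_eq_add_of_le h
  rw [Nat.add_sub_cancel_left, mul_pow]
  have h1 : 4 * (w * e) ≤ (w + e) ^ 2 := by
    zify
    nlinarith [sq_nonneg ((w : ℤ) - e)]
  exact h1.trans (Nat.le_mul_of_pos_right _ (by positivity))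

/-- Translation invariant spaces of functions on `G` are spanned by functions with values in a
field generated over `F` by few parameters. -/
lemma edi_key (F : Type*) {Ω G : Type*} [Field F] [IsAlgClosed F] [CharZero F] [Field Ω]
    [Algebra F Ω] [Group G] [Fintype G] (W : Submodule Ω (G → Ω))
    (hW : ∀ f ∈ W, ∀ h : G, (fun g => f (g * h)) ∈ W) :
    ∃ (T : Set (G → Ω)) (S : Finset Ω), Submodule.span Ω T = W ∧
      4 * S.card ≤ (finrank Ω W) ^ 2 ∧
      ∀ L : Subfield Ω, (∀ x : F, algebraMap F Ω x ∈ L) → (∀ x ∈ S, x ∈ L) →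
        ∀ t ∈ T, ∀ g, t g ∈ L := by
  classical
  obtain ⟨r, d, σ, hσ, hspan, hcard⟩ := edi_wedderburn F Ω G
  let s : ∀ i, G → Matrix (Fin (d i)) (Fin (d i)) Ω := fun i g => (σ i g).map (algebraMap F Ω)
  have hs : ∀ i g h, s i (g * h) = s i g * s i h := by
    intro i g h
    simp only [s, hσ, Matrix.map_mul]
  change Submodule.span Ω (Set.range fun g : G => fun i => s i g) = ⊤ at hspan
  let Ψ : (∀ i, Matrix (Fin (d i)) (Fin (d i)) Ω) →ₗ[Ω] (G → Ω) :=
    { toFun := fun A g => ∑ i, (A i * s i g).trace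
      map_add' := fun A B => by
        ext g; simp [add_mul, Finset.sum_add_distrib]
      map_smul' := fun c A => by
        ext g; simp [Finset.mul_sum] }
  have hΨ : ∀ A g, Ψ A g = ∑ i, (A i * s i g).trace := fun A g => rfl
  have hinj : Function.Injective Ψ := by
    rw [injective_iff_map_eq_zero]
    intro A hA
    let τ : (∀ i, Matrix (Fin (d i)) (Fin (d i)) Ω) →ₗ[Ω] Ω :=
      { toFun := fun X => ∑ i, (A i * X i).trace
        map_add' := fun A B => by
          simp [mul_add, Finset.sum_add_distrib]
        map_smul' := fun c A => by
          simp [Finset.mul_sum] }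
    have hτ : LinearMap.ker τ = ⊤ := by
      rw [eq_top_iff, ← hspan, Submodule.span_le]
      rintro _ ⟨g, rfl⟩
      exact congrFun hA g
    ext i a b
    have h1 : τ (Pi.single i (Matrix.single b a 1)) = 0 := by
      have : Pi.single i (Matrix.single b a 1) ∈ LinearMap.ker τ := hτ ▸ Submodule.mem_top
      exact this
    change ∑ j, (A j * (Pi.single i (Matrix.single b a 1) :
      ∀ i, Matrix (Fin (d i)) (Fin (d i)) Ω) j).trace = 0 at h1
    rw [Finset.sum_eq_single i] at h1
    · simpa [Matrix.trace_mul_single] using h1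
    · intro j _ hj
      simp [hj]
    · simp
  have hfr : finrank Ω (∀ i, Matrix (Fin (d i)) (Fin (d i)) Ω) = finrank Ω (G → Ω) := by
    rw [finrank_pi_fintype, finrank_pi]
    simp only [Module.finrank_matrix, Fintype.card_fin, Module.finrank_self, mul_one]
    rw [hcard, Nat.card_eq_fintype_card]
  have hsurj : Function.Surjective Ψ :=
    (LinearMap.injective_iff_surjective_of_finrank_eq_finrank hfr).1 hinj
  let I : Submodule Ω (∀ i, Matrix (Fin (d i)) (Fin (d i)) Ω) := W.comap Ψ
  have hmapI : I.map Ψ = W := Submodule.map_comap_eq_of_surjective hsurj W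
  have hfrI : finrank Ω I = finrank Ω W := by
    rw [← hmapI]
    exact (LinearEquiv.finrank_eq (Submodule.equivMapOfInjective Ψ hinj I))
  -- `I` is a left ideal
  have hideal : ∀ X, ∀ A ∈ I, X * A ∈ I := by
    intro X A hA
    let μ : (∀ i, Matrix (Fin (d i)) (Fin (d i)) Ω) →ₗ[Ω] (∀ i, Matrix (Fin (d i)) (Fin (d i)) Ω) :=
      LinearMap.mulRight Ω A
    have : I.comap μ = ⊤ := by
      rw [eq_top_iff, ← hspan, Submodule.span_le]
      rintro _ ⟨h, rfl⟩
      change Ψ ((fun i => s i h) * A) ∈ W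
      have h1 := hW (Ψ A) hA h
      convert h1 using 1
      ext g
      simp only [hΨ, hs, Pi.mul_apply]
      refine Finset.sum_congr rfl fun i _ => ?_
      rw [mul_assoc, Matrix.trace_mul_comm, mul_assoc]
    exact (this ▸ Submodule.mem_top : X ∈ I.comap μ)
  let row : ∀ i, Fin (d i) → (Fin (d i) → Ω) →ₗ[Ω] (∀ i, Matrix (Fin (d i)) (Fin (d i)) Ω) :=
    fun i a => (LinearMap.single Ω (fun i => Matrix (Fin (d i)) (Fin (d i)) Ω) i).comp
      ((Matrix.ofLinearEquiv Ω).toLinearMap.comp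
        (LinearMap.single Ω (fun _ : Fin (d i) => Fin (d i) → Ω) a))
  have hrow : ∀ i a x, row i a x = Pi.single i (Matrix.of (Pi.single a x)) := fun i a x => rfl
  have hsum : ∀ A, A = ∑ i, ∑ a, row i a (A i a) := by
    intro A
    conv_lhs => rw [← Finset.univ_sum_single A]
    refine Finset.sum_congr rfl fun i _ => ?_
    simp only [row, LinearMap.comp_apply, ← map_sum]
    exact (congrArg (fun M : Fin (d i) → Fin (d i) → Ω =>
      LinearMap.single Ω (fun i => Matrix (Fin (d i)) (Fin (d i)) Ω) i (Matrix.of M))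
      (Finset.univ_sum_single (fun a => A i a))).symm
  let V : ∀ i, Submodule Ω (Fin (d i) → Ω) := fun i => ⨅ a, I.comap (row i a)
  have hV : ∀ i x, x ∈ V i ↔ ∀ a, row i a x ∈ I := by
    intro i x
    simp [V, Submodule.mem_iInf]
  have hmem : ∀ A ∈ I, ∀ i b, A i b ∈ V i := by
    intro A hA i b
    rw [hV]
    intro a
    have h1 := hideal (Pi.single i (Matrix.single a b 1)) A hA
    convert h1 using 1
    rw [hrow]
    ext j p q
    by_cases hj : j = i
    · subst hj
      by_cases hp : p = a
      · subst hp
        simp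
      · simp [hp]
    · simp [hj]
  have hdim : ∑ i, d i * finrank Ω (V i) ≤ finrank Ω W := by
    rw [← hfrI]
    let θ : (∀ i, Fin (d i) → V i) →ₗ[Ω] (∀ i, Matrix (Fin (d i)) (Fin (d i)) Ω) :=
      { toFun := fun x i => Matrix.of fun a => (x i a : Fin (d i) → Ω)
        map_add' := fun x y => by ext; simp
        map_smul' := fun c x => by ext; simp }
    have hθ : ∀ x, θ x ∈ I := by
      intro x
      rw [hsum (θ x)]
      refine I.sum_mem fun i _ => I.sum_mem fun a _ => ?_
      exact (hV i _).1 (x i a).2 a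
    have hθinj : Function.Injective (θ.codRestrict I hθ) := by
      intro x y hxy
      have h1 : θ x = θ y := congrArg Subtype.val hxy
      funext i a
      apply Subtype.ext
      exact congrFun (congrFun h1 i) a
    have := LinearMap.finrank_le_finrank_of_injective hθinj
    rw [finrank_pi_fintype] at this
    simpa [finrank_pi_fintype] using this
  choose T S hT hTS hS using fun i => edi_echelon (V i)
  refine ⟨{f | ∃ i a, ∃ t ∈ T i, f = Ψ (row i a t)}, Finset.univ.biUnion S, ?_, ?_, ?_⟩
  · apply le_antisymm
    · rw [Submodule.span_le]
      rintro _ ⟨i, a, t, ht, rfl⟩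
      have h1 : t ∈ V i := by
        rw [← hT i]; exact Submodule.subset_span ht
      exact (hV i t).1 h1 a
    · rw [← hmapI]
      rintro _ ⟨A, hA, rfl⟩
      rw [hsum A, map_sum]
      refine Submodule.sum_mem _ fun i _ => ?_
      rw [map_sum]
      refine Submodule.sum_mem _ fun a _ => ?_
      have h1 : A i a ∈ Submodule.span Ω (T i) := by
        rw [hT i]; exact hmem A hA i a
      have h2 : Submodule.span Ω (T i) ≤ Submodule.comap (Ψ.comp (row i a))
          (Submodule.span Ω {f | ∃ i a, ∃ t ∈ T i, f = Ψ (row i a t)}) := by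
        rw [Submodule.span_le]
        intro t ht
        exact Submodule.subset_span ⟨i, a, t, ht, rfl⟩
      exact h2 h1
  · calc 4 * (Finset.univ.biUnion S).card ≤ 4 * ∑ i, (S i).card :=
          Nat.mul_le_mul_left _ Finset.card_biUnion_le
      _ = ∑ i, 4 * (S i).card := Finset.mul_sum _ _ _
      _ ≤ ∑ i, (d i * finrank Ω (V i)) ^ 2 := by
          refine Finset.sum_le_sum fun i _ => ?_
          refine (Nat.mul_le_mul_left 4 (hS i)).trans ?_
          rw [Fintype.card_fin]
          exact edi_arith _ _
      _ ≤ (∑ i, d i * finrank Ω (V i)) ^ 2 :=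
          Finset.sum_sq_le_sq_sum_of_nonneg fun i _ => Nat.zero_le _
      _ ≤ _ := Nat.pow_le_pow_left hdim 2
  · rintro L hF hSL _ ⟨i, a, t, ht, rfl⟩ g
    have htL : ∀ b, t b ∈ L := by
      intro b
      rcases hTS i t ht b with h | h | h
      · rw [h]; exact L.zero_mem
      · rw [h]; exact L.one_mem
      · exact hSL _ (Finset.mem_biUnion.2 ⟨i, Finset.mem_univ _, h⟩)
    rw [hΨ]
    refine L.sum_mem fun j _ => L.sum_mem fun p _ => ?_
    rw [Matrix.diag_apply, Matrix.mul_apply]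
    refine L.sum_mem fun q _ => L.mul_mem ?_ (hF _)
    rw [hrow]
    by_cases hj : j = i
    · subst hj
      by_cases hp : p = a
      · subst hp
        simpa using htL q
      · simp [hp]
    · simp [hj]

/-- Normal form: an irreducible representation is conjugate to one whose entries are among the
entries of a matrix `C` containing an identity block, with translation equivariance. -/
lemma edi_normal_form {K G : Type*} [Field K] [Group G] [Fintype G] {n : ℕ}
    (ρ : G →* GL (Fin n) K) (hirr : IsIrreducibleRep ρ) :
    ∃ (M : GL (Fin n) K) (C : Matrix G (Fin n) K) (j : Fin n → G),
      (C.submatrix j id = 1) ∧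
      (∀ g h b, (C * ((M * ρ h * M⁻¹ : GL (Fin n) K) : Matrix (Fin n) (Fin n) K)) g b
        = C (g * h) b) := by
  classical
  obtain ⟨hn, hirr⟩ := hirr
  let i0 : Fin n := ⟨0, hn⟩
  let B : Matrix G (Fin n) K := Matrix.of fun g b => (ρ g : Matrix (Fin n) (Fin n) K) i0 b
  have hB : ∀ g h b, (B * (ρ h : Matrix (Fin n) (Fin n) K)) g b = B (g * h) b := by
    intro g h b
    simp only [B, Matrix.of_apply, map_mul, Units.val_mul]
    rfl
  have hBv : ∀ v g, B.mulVec v g = (ρ g : Matrix (Fin n) (Fin n) K).mulVec v i0 :=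
    fun v g => rfl
  have hker : LinearMap.ker B.mulVecLin = ⊥ := by
    refine (hirr _ ?_).resolve_right ?_
    · intro h v hv
      rw [LinearMap.mem_ker, Matrix.mulVecLin_apply] at hv ⊢
      ext g
      rw [Matrix.mulVec_mulVec]
      have h1 : (B * (ρ h : Matrix (Fin n) (Fin n) K)).mulVec v g = B.mulVec v (g * h) := by
        simp only [Matrix.mulVec, dotProduct, hB]
      rw [h1, hv]; rfl
    · intro htop
      have h1 : Pi.single i0 1 ∈ LinearMap.ker B.mulVecLin := htop ▸ Submodule.mem_top
      have h2 := congrFun (LinearMap.mem_ker.1 h1) 1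
      rw [Matrix.mulVecLin_apply, hBv] at h2
      simp at h2
  have hBinj : Function.Injective B.mulVecLin := LinearMap.ker_eq_bot.1 hker
  obtain ⟨κ, _, a, e, ha, he⟩ := edi_exists_coords (LinearMap.range B.mulVecLin)
  have hcard : Fintype.card κ = n := by
    have h1 := e.finrank_eq
    rw [LinearMap.finrank_range_of_inj hBinj, finrank_pi, finrank_pi, Fintype.card_fin] at h1
    exact h1.symm
  let ε : κ ≃ Fin n := Fintype.equivFinOfCardEq hcard
  let j : Fin n → G := fun x => a (ε.symm x)
  let M0 : Matrix (Fin n) (Fin n) K := B.submatrix j id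
  have hM0 : IsUnit M0 := by
    rw [← Matrix.mulVec_injective_iff_isUnit]
    intro v w hvw
    apply hBinj
    have h1 : (⟨B.mulVecLin v, ⟨v, rfl⟩⟩ : LinearMap.range B.mulVecLin)
        = ⟨B.mulVecLin w, ⟨w, rfl⟩⟩ := by
      apply e.injective
      ext c
      rw [he, he]
      have h2 := congrFun hvw (ε c)
      simpa [M0, j, Matrix.mulVec, dotProduct] using h2
    exact congrArg Subtype.val h1
  obtain ⟨M, hM⟩ := hM0
  refine ⟨M, B * ((M⁻¹ : GL (Fin n) K) : Matrix (Fin n) (Fin n) K), j, ?_, ?_⟩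
  · have h1 : (B * ((M⁻¹ : GL (Fin n) K) : Matrix (Fin n) (Fin n) K)).submatrix j id
        = M0 * ((M⁻¹ : GL (Fin n) K) : Matrix (Fin n) (Fin n) K) := rfl
    rw [h1, ← hM, ← Units.val_mul, mul_inv_cancel, Units.val_one]
  · intro g h b
    have h1 : B * ((M⁻¹ : GL (Fin n) K) : Matrix (Fin n) (Fin n) K) *
        ((M * ρ h * M⁻¹ : GL (Fin n) K) : Matrix (Fin n) (Fin n) K)
        = B * (ρ h : Matrix (Fin n) (Fin n) K) *
          ((M⁻¹ : GL (Fin n) K) : Matrix (Fin n) (Fin n) K) := by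
      rw [Matrix.mul_assoc, Matrix.mul_assoc, ← Units.val_mul, ← Units.val_mul]
      congr 2
      group
    rw [h1, Matrix.mul_apply, Matrix.mul_apply]
    simp only [hB]

/-- Let `k` be a field of characteristic `0`, `K/k` a field extension, `G` a finite
group, and `ρ : G → GL_n(K)` a `K`-irreducible representation.  Then `ρ` descends to an
intermediate field `k ⊆ K₀ ⊆ K` of transcendence degree at most `n²/4` over `k`. -/
theorem ed_irreducible_le {k : Type*} [Field k] [CharZero k]
    {K : Type*} [Field K] [Algebra k K]
    {G : Type*} [Group G] [Finite G] {n : ℕ}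
    (ρ : G →* GL (Fin n) K) (hirr : IsIrreducibleRep ρ) :
    ∃ K₀ : IntermediateField k K, Descends ρ K₀ ∧ FourTrdegLE K₀ (n ^ 2) := by
  classical
  have : Fintype G := Fintype.ofFinite G
  obtain ⟨M, C, j, hC1, hC⟩ := edi_normal_form ρ hirr
  let ρ1 : G → GL (Fin n) K := fun h => M * ρ h * M⁻¹
  have hρ1 : ∀ h x y, (ρ1 h : Matrix (Fin n) (Fin n) K) x y = C (j x * h) y := by
    intro h x y
    rw [← hC]
    have h1 : (C * (ρ1 h : Matrix (Fin n) (Fin n) K)).submatrix j id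
        = C.submatrix j id * (ρ1 h : Matrix (Fin n) (Fin n) K) := rfl
    rw [hC1, one_mul] at h1
    exact (congrFun (congrFun h1 x) y).symm
  let Ω := AlgebraicClosure K
  let F := algebraicClosure k Ω
  have hFc : IsAlgClosed F := (algebraicClosure.isAlgClosure (F := k) (E := Ω)).isAlgClosed
  have hF0 : CharZero F := charZero_of_injective_algebraMap (algebraMap k F).injective
  let CΩ : Matrix G (Fin n) Ω := C.map (algebraMap K Ω)
  let W : Submodule Ω (G → Ω) := LinearMap.range CΩ.mulVecLin
  have hW : ∀ f ∈ W, ∀ h : G, (fun g => f (g * h)) ∈ W := by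
    rintro _ ⟨v, rfl⟩ h
    refine ⟨((ρ1 h : Matrix (Fin n) (Fin n) K).map (algebraMap K Ω)).mulVec v, ?_⟩
    ext g
    rw [Matrix.mulVecLin_apply, Matrix.mulVecLin_apply, Matrix.mulVec_mulVec, ← Matrix.map_mul]
    simp only [Matrix.mulVec, dotProduct, Matrix.map_apply, CΩ]
    refine Finset.sum_congr rfl fun b _ => ?_
    rw [hC]
  obtain ⟨T, S, hT, hS, hL⟩ := edi_key F W hW
  have hWn : finrank Ω W ≤ n := by
    refine (LinearMap.finrank_range_le _).trans ?_
    rw [finrank_pi, Fintype.card_fin]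
  let L0 := IntermediateField.adjoin k (S : Set Ω)
  let L : IntermediateField k Ω := (algebraicClosure L0 Ω).restrictScalars k
  have hLmem : ∀ x, x ∈ L ↔ IsAlgebraic L0 x := fun x => mem_algebraicClosure_iff
  have hFL : ∀ x : F, algebraMap F Ω x ∈ L := by
    intro x
    rw [hLmem]
    have h1 : IsAlgebraic k (x : Ω) := mem_algebraicClosure_iff.1 x.2
    exact h1.tower_top L0
  have hSL : ∀ x ∈ S, x ∈ L := by
    intro x hx
    rw [hLmem]
    exact isAlgebraic_algebraMap (⟨x, IntermediateField.subset_adjoin k _ hx⟩ : L0)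
  have hCL : ∀ g b, algebraMap K Ω (C g b) ∈ L := by
    intro g b
    refine edi_entries_mem L.toSubfield CΩ j ?_ T hT (hL L.toSubfield hFL hSL) g b
    intro c v
    have h1 : CΩ.submatrix j id = 1 := by
      have : CΩ.submatrix j id = (C.submatrix j id).map (algebraMap K Ω) := rfl
      rw [this, hC1]
      simp
    have h2 : CΩ.mulVec v (j c) = (CΩ.submatrix j id).mulVec v c := rfl
    rw [h2, h1, Matrix.one_mulVec]
  let ι : K →ₐ[k] Ω := IsScalarTower.toAlgHom k K Ω
  let K₀ : IntermediateField k K := L.comap ι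
  have hK₀ : ∀ g b, C g b ∈ K₀ := hCL
  refine ⟨K₀, ?_, ?_⟩
  · let τ : G → Matrix (Fin n) (Fin n) K₀ := fun h => Matrix.of fun x y => ⟨C (j x * h) y, hK₀ _ _⟩
    have hτ : ∀ h, (algebraMap K₀ K).mapMatrix (τ h) = (ρ1 h : Matrix (Fin n) (Fin n) K) := by
      intro h
      ext x y
      rw [hρ1]; rfl
    have hinj : Function.Injective ((algebraMap K₀ K).mapMatrix (m := Fin n)) := by
      intro A B hAB
      exact Matrix.map_injective (algebraMap K₀ K).injective hAB
    let τh : G →* Matrix (Fin n) (Fin n) K₀ :=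
      { toFun := τ
        map_one' := by
          apply hinj
          rw [hτ, map_one]
          simp [ρ1]
        map_mul' := fun g h => by
          apply hinj
          rw [map_mul, hτ, hτ, hτ, ← Units.val_mul]
          congr 1
          simp only [ρ1, map_mul]
          group }
    refine ⟨τh.toHomUnits, M⁻¹, fun g => ?_⟩
    have h1 : Units.map ((algebraMap K₀ K).mapMatrix).toMonoidHom (τh.toHomUnits g) = ρ1 g := by
      apply Units.ext
      exact hτ g
    rw [h1]
    simp only [ρ1]
    group
  · intro s hs
    let ι0 : K₀ →ₐ[k] Ω := ι.comp K₀.val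
    have hι0 : Function.Injective ι0 := ι0.injective
    have h1 : AlgebraicIndependent k (fun x : {y : K₀ // y ∈ s} => ι0 x) :=
      hs.map' hι0
    have h2 : AlgebraicIndependent k
        (fun x : {y : Ω // y ∈ s.image ι0} => (x : Ω)) := by
      have h3 := h1.to_subtype_range
      have h4 : Set.range (fun x : {y : K₀ // y ∈ s} => ι0 x) = {y : Ω | y ∈ s.image ι0} := by
        ext y
        simp
      rw [h4] at h3
      exact h3
    have h5 := edi_card_le S (s.image ι0) (by
      intro x hx
      obtain ⟨y, -, rfl⟩ := Finset.mem_image.1 hx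
      exact (hLmem _).1 y.2) h2
    rw [Finset.card_image_of_injective _ hι0] at h5
    calc 4 * s.card ≤ 4 * S.card := Nat.mul_le_mul_left _ h5
      _ ≤ _ := hS
      _ ≤ n ^ 2 := Nat.pow_le_pow_left hWn 2
end

section
/- Let k be a field of characteristic 0, K/k a field extension, G a finite group, and ρ : G → GL_n(K) an arbitrary finite-dimensional representation. Then ρ descends to an intermediate field k ⊆ K₀ ⊆ K whose transcendence degree over k is at most |G|²/4; that is, there exists an intermediate field K₀ with 4·trdeg_k(K₀) ≤ |G|² and a representation ρ' : G → GL_n(K₀) whose base change to K is K-equivalent to ρ. -/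
open Matrix

section
variable {k K : Type*} [Field k] [Field K] [Algebra k K]

/-- relative algebraic closure of `k(S)` in `K`. -/
noncomputable def relClosure (k : Type*) {K : Type*} [Field k] [Field K] [Algebra k K] (S : Set K) :
    IntermediateField k K :=
  (algebraicClosure (IntermediateField.adjoin k S) K).restrictScalars k

open IntermediateField.algebraAdjoinAdjoin in
lemma mem_relClosure {S : Set K} {x : K} :
    x ∈ relClosure k S ↔ IsAlgebraic (Algebra.adjoin k S) x := by
  rw [relClosure, IntermediateField.mem_restrictScalars, mem_algebraicClosure_iff,
    IsFractionRing.isAlgebraic_iff (Algebra.adjoin k S) (IntermediateField.adjoin k S) K]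

lemma mem_relClosure_of_mem {S : Set K} {x : K} (hx : x ∈ S) : x ∈ relClosure k S := by
  rw [mem_relClosure]
  exact isAlgebraic_algebraMap (⟨x, Algebra.subset_adjoin hx⟩ : Algebra.adjoin k S)

lemma mem_relClosure_of_isAlgebraic {S : Set K} {x : K} (hx : IsAlgebraic k x) :
    x ∈ relClosure k S := by
  rw [relClosure, IntermediateField.mem_restrictScalars, mem_algebraicClosure_iff]
  exact hx.tower_top _

lemma fourTrdeg_relClosure (S : Finset K) (N : ℕ) (h : 4 * S.card ≤ N) :
    FourTrdegLE (relClosure k (S : Set K)) N := by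
  intro s hs
  classical
  have h1 : AlgebraicIndependent k (fun x : {y : relClosure k (S : Set K) // y ∈ s} =>
      ((x : relClosure k (S : Set K)) : K)) :=
    hs.map' (f := (relClosure k (S : Set K)).val) Subtype.val_injective
  have h2 := h1.coe_range
  have h3 : (AlgebraicIndependent.matroid k K).Indep (Set.range (fun x : {y : relClosure k (S : Set K) // y ∈ s} =>
      ((x : relClosure k (S : Set K)) : K))) := by
    rw [AlgebraicIndependent.matroid_indep_iff]
    exact h2
  have h4 : (Set.range (fun x : {y : relClosure k (S : Set K) // y ∈ s} =>
      ((x : relClosure k (S : Set K)) : K))) ⊆ (AlgebraicIndependent.matroid k K).closure S := by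
    rintro _ ⟨x, rfl⟩
    rw [AlgebraicIndependent.matroid_closure_eq]
    have := mem_relClosure.1 x.1.2
    exact this
  have h5 := h3.encard_le_eRk_of_subset h4
  rw [Matroid.eRk_closure_eq] at h5
  have h6 := h5.trans (Matroid.eRk_le_encard _ _)
  rw [← Set.image_univ, Function.Injective.encard_image (by
    intro a b hab; exact Subtype.ext (Subtype.ext hab))] at h6
  simp [Set.encard_univ] at h6
  omega

variable {W : Type*} [AddCommGroup W] [Module K W]

lemma exists_coords {ι : Type*} [Fintype ι] [FiniteDimensional K W] (φ : ι → W →ₗ[K] K)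
    (hφ : ∀ x, (∀ i, φ i x = 0) → x = 0) :
    ∃ S : Finset K, 4 * S.card ≤ (Fintype.card ι) ^ 2 ∧ ∀ L : IntermediateField k K,
      (S : Set K) ⊆ L → Submodule.span K {x | ∀ i, φ i x ∈ L} = ⊤ := by
  classical
  obtain ⟨κ, a, ha, hsp, hli⟩ := exists_linearIndependent' K φ
  have : Finite κ := Finite.of_injective a ha
  have : Fintype κ := Fintype.ofFinite κ
  let f : W →ₗ[K] (κ → K) := LinearMap.pi (fun j => φ (a j))
  have hinj : Function.Injective f := by
    rw [injective_iff_map_eq_zero]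
    intro x hx
    apply hφ
    have : Submodule.span K (Set.range (φ ∘ a)) ≤ LinearMap.ker (Module.Dual.eval K W x) := by
      rw [Submodule.span_le]
      rintro _ ⟨j, rfl⟩
      exact congrFun hx j
    intro i
    rw [hsp] at this
    exact this (Submodule.subset_span ⟨i, rfl⟩)
  have hc1 : Fintype.card κ ≤ Module.finrank K W := by
    have := hli.fintype_card_le_finrank
    rwa [show Module.finrank K (W →ₗ[K] K) = Module.finrank K W from Subspace.dual_finrank_eq] at this
  have hc2 := LinearMap.finrank_le_finrank_of_injective hinj
  rw [Module.finrank_fintype_fun_eq_card] at hc2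
  let e : W ≃ₗ[K] (κ → K) := LinearEquiv.ofInjectiveOfFinrankEq f hinj
    (by rw [Module.finrank_fintype_fun_eq_card]; omega)
  have he : ∀ x j, e x j = φ (a j) x := fun x j => rfl
  let b : Module.Basis κ K W := Module.Basis.ofEquivFun e
  have hb : ∀ j j', φ (a j') (b j) = if j = j' then 1 else 0 := by
    intro j j'
    rw [← he]
    simp [b, Pi.single_apply, eq_comm]
  refine ⟨Finset.image (fun p : κ × ι => φ p.2 (b p.1))
    (Finset.univ ×ˢ (Finset.univ.image a)ᶜ), ?_, ?_⟩
  · have h1 : (Finset.image (fun p : κ × ι => φ p.2 (b p.1))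
      (Finset.univ ×ˢ (Finset.univ.image a)ᶜ)).card ≤ Fintype.card κ * (Fintype.card ι - Fintype.card κ) := by
      refine Finset.card_image_le.trans ?_
      rw [Finset.card_product, Finset.card_compl, Finset.card_image_of_injective _ ha]
      simp
    have h2 : Fintype.card κ ≤ Fintype.card ι := Fintype.card_le_of_injective a ha
    obtain ⟨d, hd⟩ := Nat.exists_eq_add_of_le h2
    rw [hd] at h1 ⊢
    rw [Nat.add_sub_cancel_left] at h1
    zify at *
    nlinarith [sq_nonneg ((Fintype.card κ : ℤ) - d)]
  · intro L hL
    rw [eq_top_iff, ← b.span_eq, Submodule.span_le]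
    rintro _ ⟨j, rfl⟩
    refine Submodule.subset_span fun i => ?_
    by_cases hi : i ∈ Set.range a
    · obtain ⟨j', rfl⟩ := hi
      rw [hb]
      split_ifs
      · exact one_mem L
      · exact zero_mem L
    · apply hL
      simp only [Finset.coe_image, Set.mem_image]
      refine ⟨(j, i), ?_, rfl⟩
      simpa using hi

lemma li_of_rational {ι κ : Type*} (φ : ι → W →ₗ[K] K)
    (hφ : ∀ x, (∀ i, φ i x = 0) → x = 0) (L : IntermediateField k K) (v : κ → W)
    (hv : ∀ j i, φ i (v j) ∈ L) (hli : LinearIndependent L v) : LinearIndependent K v := by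
  rw [linearIndependent_iff'] at hli ⊢
  intro s c hc j hj
  rw [← Module.forall_dual_apply_eq_zero_iff L]
  intro f
  refine hli s (fun j => f (c j)) (hφ _ fun i => ?_) j hj
  have h1 := congrArg (φ i) hc
  simp only [map_sum, map_smul, map_zero, smul_eq_mul] at h1
  have h2 := congrArg (fun y => ((f y : L) : K)) h1
  simp only [map_sum, map_zero] at h2
  rw [map_sum]
  have h3 : ∀ j, f (c j * φ i (v j)) = (⟨φ i (v j), hv j i⟩ : L) * f (c j) := by
    intro j
    have h4 := f.map_smul (⟨φ i (v j), hv j i⟩ : L) (c j)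
    rw [smul_eq_mul] at h4
    rw [← h4, Algebra.smul_def, mul_comm]
    rfl
  simp only [h3] at h2
  rw [← ZeroMemClass.coe_zero L, ← h2, AddSubmonoidClass.coe_finsetSum]
  refine Finset.sum_congr rfl fun j _ => ?_
  rw [show f (c j) • v j = ((f (c j) : L) : K) • v j from rfl, map_smul]
  simp [mul_comm]

lemma exists_rational_basis {ι : Type*} [FiniteDimensional K W] (φ : ι → W →ₗ[K] K)
    (hφ : ∀ x, (∀ i, φ i x = 0) → x = 0) (L : IntermediateField k K)
    (hsp : Submodule.span K {x | ∀ i, φ i x ∈ L} = ⊤) :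
    ∃ (m : ℕ) (b : Module.Basis (Fin m) K W), ∀ T : W → W,
      (∀ x, (∀ i, φ i x ∈ L) → ∀ i, φ i (T x) ∈ L) → ∀ i j, b.repr (T (b j)) i ∈ L := by
  let W0 : Submodule L W :=
    { carrier := {x | ∀ i, φ i x ∈ L}
      add_mem' := fun {x y} hx hy i => by rw [map_add]; exact add_mem (hx i) (hy i)
      zero_mem' := fun i => by rw [map_zero]; exact zero_mem L
      smul_mem' := fun c x hx i => by
        rw [show c • x = (c : K) • x from rfl, map_smul]; exact mul_mem c.2 (hx i) }
  let b0 := Module.Basis.ofVectorSpace L W0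
  let v := fun i => (b0 i : W)
  have hv : LinearIndependent L v := b0.linearIndependent.map' W0.subtype (by simp)
  have hvK : LinearIndependent K v := li_of_rational φ hφ L v (fun j i => (b0 j).2 i) hv
  have hfin := hvK.finite
  have key : ∀ x : W0, (x : W) = (b0.repr x).sum fun i c => (c : K) • v i := by
    intro x
    conv_lhs => rw [← b0.linearCombination_repr x, Finsupp.linearCombination_apply]
    simp only [Finsupp.sum, Submodule.coe_sum]
    rfl
  have htop : ⊤ ≤ Submodule.span K (Set.range v) := by
    rw [← hsp, Submodule.span_le]
    intro x hx
    rw [SetLike.mem_coe, show x = ((⟨x, hx⟩ : W0) : W) from rfl, key]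
    exact Submodule.sum_mem _ fun i _ => Submodule.smul_mem _ _ (Submodule.subset_span ⟨i, rfl⟩)
  let b := Module.Basis.mk hvK htop
  have hb : ∀ i, b i = v i := fun i => by simp [b]
  have hr : ∀ x : W0, ∀ i, b.repr x i ∈ L := by
    intro x i
    classical
    rw [key, Finsupp.sum, map_sum, Finsupp.finsetSum_apply]
    refine sum_mem fun j _ => ?_
    rw [map_smul, ← hb, b.repr_self, Finsupp.smul_apply, Finsupp.single_apply]
    refine mul_mem (SetLike.coe_mem _) ?_
    split_ifs
    · exact one_mem L
    · exact zero_mem L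
  refine ⟨_, b.reindex (Finite.equivFin _), fun T hT i j => ?_⟩
  rw [Module.Basis.repr_reindex_apply, Module.Basis.reindex_apply, hb]
  exact hr ⟨_, hT _ (b0 _).2⟩ _
end

lemma exists_multfree {R : Type*} [Ring R] [IsSemisimpleRing R] :
    ∃ I : Ideal R, ∀ M : Ideal R, IsSimpleModule R M → ∃ e : R, IsIdempotentElem e ∧
      (∀ x, e * x = x * e) ∧ ∃ J : Ideal R, Nonempty (M ≃ₗ[R] J) ∧
        (J : Set R) = (fun x => e * x) '' (I : Set R) := by
  classical
  let C := isotypicComponents R R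
  have hfin : Finite C := inferInstance
  have : Fintype C := Fintype.ofFinite C
  have hex : ∀ c : C, ∃ S : Ideal R, IsSimpleModule R S ∧ c.1 = isotypicComponent R R S := by
    rintro ⟨c, S, hS, rfl⟩
    exact ⟨S, hS, rfl⟩
  choose S hS hcS using hex
  have hSc : ∀ c : C, S c ≤ c.1 := fun c => by
    rw [hcS c]; exact Submodule.le_isotypicComponent (S c)
  have hts : ∀ c : C, ∀ x ∈ c.1, ∀ r, x * r ∈ c.1 := by
    intro c x hx r
    have h := Submodule.IsFullyInvariant.of_mem_isotypicComponents c.2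
    have h2 := isFullyInvariant_iff_isTwoSided.1 h
    exact h2.mul_mem_of_left r hx
  have hdisj : ∀ c d : C, c ≠ d → ∀ x, x ∈ c.1 → x ∈ d.1 → x = 0 := by
    intro c d hcd x hx hx'
    have h := (sSupIndep_isotypicComponents R R).pairwiseDisjoint c.2 d.2
      (fun h => hcd (Subtype.ext h))
    exact (Submodule.disjoint_def.1 h) x hx hx'
  have h1 : (1 : R) ∈ ⨆ c : C, c.1 := by
    rw [← sSup_eq_iSup', sSup_isotypicComponents]; trivial
  obtain ⟨e, he⟩ := (Submodule.mem_iSup_iff_exists_finsupp _ _).1 h1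
  obtain ⟨hec, hsum⟩ := he
  have hsum' : ∑ c, e c = 1 := by
    rw [← hsum, Finsupp.sum_fintype _ _ (fun _ => rfl)]
  have horth : ∀ c d : C, c ≠ d → ∀ x ∈ d.1, e c * x = 0 := fun c d hcd x hx =>
    hdisj c d hcd _ (hts c _ (hec c) _) (d.1.smul_mem _ hx)
  have horth' : ∀ c d : C, c ≠ d → ∀ x ∈ d.1, x * e c = 0 := fun c d hcd x hx =>
    hdisj c d hcd _ (c.1.smul_mem _ (hec c)) (hts d _ hx _)
  have hid : ∀ c : C, ∀ x ∈ c.1, e c * x = x := by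
    intro c x hx
    conv_rhs => rw [← one_mul x, ← hsum', Finset.sum_mul]
    rw [Finset.sum_eq_single c (fun d _ hd => horth d c hd x hx) (by simp)]
  have hid' : ∀ c : C, ∀ x ∈ c.1, x * e c = x := by
    intro c x hx
    conv_rhs => rw [← mul_one x, ← hsum', Finset.mul_sum]
    rw [Finset.sum_eq_single c (fun d _ hd => horth' d c hd x hx) (by simp)]
  refine ⟨⨆ c, S c, fun M hM => ?_⟩
  let c : C := ⟨isotypicComponent R R M, M, hM, rfl⟩
  have hMS : Nonempty (M ≃ₗ[R] S c) := by
    have h := IsIsotypicOfType.isotypicComponent R R (S c)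
    rw [← hcS c] at h
    exact (isIsotypicOfType_submodule_iff.1 h) M (Submodule.le_isotypicComponent M) 
  refine ⟨e c, hid c _ (hec c), fun x => ?_, S c, hMS, ?_⟩
  · rw [← hid' c (e c * x) (hts c _ (hec c) _), mul_assoc, 
      hid c (x * e c) (c.1.smul_mem _ (hec c))]
  · ext y
    constructor
    · intro hy
      exact ⟨y, (le_iSup S c) hy, hid c y (hSc c hy)⟩
    · rintro ⟨x, hx, rfl⟩
      have : ⨆ c, S c ≤ Submodule.comap (LinearMap.toSpanSingleton R R (e c)) (S c) := by
        refine iSup_le fun d x hx => ?_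
        have hcomm : x * e c ∈ S c := by
          by_cases hd : c = d
          · subst hd
            rw [hid' c x (hSc c hx)]; exact hx
          · rw [horth' c d hd x (hSc d hx)]; exact zero_mem _
        simpa using hcomm
      have h2 := this hx
      have h3 : x * e c ∈ S c := by simpa using h2
      have h4 : e c * x = x * e c := by
        rw [← hid' c (e c * x) (hts c _ (hec c) _), mul_assoc, 
          hid c (x * e c) (c.1.smul_mem _ (hec c))]
      simpa [h4] using h3

lemma isAlgebraic_trace {k K : Type*} [Field k] [Field K] [Algebra k K] {ι : Type*} [Fintype ι]
    [DecidableEq ι] (A : Matrix ι ι K) (N : ℕ) (hN : 1 < N) (hA : A ^ N = A) : IsAlgebraic k A.trace := by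
  let F := AlgebraicClosure K
  rw [← isAlgebraic_algebraMap_iff (algebraMap K F).injective]
  let B := A.map (algebraMap K F)
  have hB : B ^ N = B := by
    have := congrArg (algebraMap K F).mapMatrix hA
    rw [map_pow] at this
    exact this
  have : algebraMap K F A.trace = B.trace := by
    exact AddMonoidHom.map_trace (algebraMap K F).toAddMonoidHom A
  rw [this, Matrix.trace_eq_sum_roots_charpoly, isAlgebraic_iff_isIntegral]
  refine IsIntegral.multiset_sum fun μ hμ => ?_
  have hμ' : B.charpoly.IsRoot μ := by
    exact Polynomial.isRoot_of_mem_roots hμ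
  have h1 : Module.End.HasEigenvalue (Matrix.toLin' B) μ := by
    rw [Module.End.hasEigenvalue_iff_isRoot_charpoly]
    simpa using hμ'
  obtain ⟨v, hv⟩ := h1.exists_hasEigenvector
  have h2 := hv.pow_apply N
  rw [← Matrix.toLin'_pow, hB, hv.apply_eq_smul] at h2
  have h3 : μ = μ ^ N := smul_left_injective F hv.2 h2
  refine ⟨Polynomial.X ^ N - Polynomial.X, ?_, ?_⟩
  · exact Polynomial.monic_X_pow_sub (by simpa using hN)
  · simp [← h3]

open MonoidAlgebra in
lemma coeff_isAlgebraic {k K G : Type*} [Field k] [Field K] [Algebra k K] [CharZero K] [Group G]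
    [Finite G] (e : MonoidAlgebra K G) (he : IsIdempotentElem e) (hc : ∀ x, e * x = x * e) (g : G) :
    IsAlgebraic k (e.coeff g) := by
  classical
  have := Fintype.ofFinite G
  let A : MonoidAlgebra K G → Matrix G G K := fun x => Matrix.of fun a b => x.coeff (a * b⁻¹)
  have hmul : ∀ x y, A (x * y) = A x * A y := by
    intro x y
    ext a b
    simp only [A, Matrix.of_apply, Matrix.mul_apply]
    rw [coeff_mul_apply_left, Finsupp.sum_fintype _ _ (by simp)]
    refine Fintype.sum_equiv ((Equiv.inv G).trans (Equiv.mulRight a)) _ _ fun c => ?_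
    simp [mul_assoc]
  have hpow : ∀ x (n : ℕ), A (x ^ (n+1)) = A x ^ (n+1) := by
    intro x n
    induction n with
    | zero => simp
    | succ n ih => rw [pow_succ, hmul, ih, ← pow_succ]
  let x := single g⁻¹ (1 : K) * e
  have hx : x ^ (Fintype.card G + 1) = x := by
    have hcom : Commute (single g⁻¹ (1 : K)) e := (hc _).symm
    simp only [x]
    rw [hcom.mul_pow, he.pow_succ_eq, pow_succ, single_pow, pow_card_eq_one]
    simp [← one_def]
  have h1 := isAlgebraic_trace (k := k) (A x) (Fintype.card G + 1) (by have := Fintype.card_pos (α := G); omega)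
    (by rw [← hpow, hx])
  have h2 : (A x).trace = Fintype.card G * e.coeff g := by
    simp [Matrix.trace, A, x]
  rw [h2] at h1
  have h3 : e.coeff g = (Fintype.card G : K)⁻¹ * (Fintype.card G * e.coeff g) := by
    field_simp
  rw [h3]
  exact (isAlgebraic_natCast _).inv.mul h1

open MonoidAlgebra in
/-- `W` has a `K`-basis in which `G` acts by matrices with entries in `L`. -/
def RatBasis {k K : Type*} [Field k] [Field K] [Algebra k K] (G : Type*) [Group G]
    (L : IntermediateField k K) (W : Type*) [AddCommGroup W] [Module K W]
    [Module (MonoidAlgebra K G) W] : Prop :=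
  ∃ (m : ℕ) (b : Module.Basis (Fin m) K W), ∀ (g : G) i j,
    b.repr ((single g (1 : K)) • b j) i ∈ L

section
variable {k K G : Type*} [Field k] [Field K] [Algebra k K] [Group G] {L : IntermediateField k K}

lemma RatBasis.congr {W W' : Type*} [AddCommGroup W] [Module K W]
    [Module (MonoidAlgebra K G) W] [IsScalarTower K (MonoidAlgebra K G) W]
    [AddCommGroup W'] [Module K W']
    [Module (MonoidAlgebra K G) W'] [IsScalarTower K (MonoidAlgebra K G) W']
    (e : W ≃ₗ[MonoidAlgebra K G] W') (h : RatBasis G L W) : RatBasis G L W' := by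
  obtain ⟨m, b, hb⟩ := h
  refine ⟨m, b.map (e.restrictScalars K), fun g i j => ?_⟩
  have := hb g i j
  simpa using this

lemma RatBasis.pi {n : ℕ} {W : Fin n → Type*} [∀ i, AddCommGroup (W i)] [∀ i, Module K (W i)]
    [∀ i, Module (MonoidAlgebra K G) (W i)] (h : ∀ i, RatBasis G L (W i)) :
    RatBasis G L (Π i, W i) := by
  classical
  choose m b hb using h
  refine ⟨_, (Pi.basis b).reindex (Finite.equivFin _), fun g i j => ?_⟩
  rw [Module.Basis.repr_reindex_apply, Module.Basis.reindex_apply]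
  generalize (Finite.equivFin _).symm i = p
  generalize (Finite.equivFin _).symm j = q
  obtain ⟨p1, p2⟩ := p
  obtain ⟨q1, q2⟩ := q
  rw [Pi.basis_repr, Pi.basis_apply, Pi.smul_apply]
  by_cases hpq : q1 = p1
  · subst hpq
    rw [Pi.single_eq_same]
    exact hb _ g _ _
  · rw [Pi.single_eq_of_ne (Ne.symm hpq), smul_zero, map_zero]
    exact zero_mem L

/-- coefficient functionals on a left ideal. -/
noncomputable def coeffFun (J : Ideal (MonoidAlgebra K G)) (g : G) : J →ₗ[K] K where
  toFun x := x.1.coeff g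
  map_add' _ _ := rfl
  map_smul' _ _ := rfl

lemma coeffFun_inj (J : Ideal (MonoidAlgebra K G)) (x : J) (h : ∀ g, coeffFun J g x = 0) :
    x = 0 := by
  apply Subtype.ext
  apply MonoidAlgebra.coeff_injective
  ext g
  exact h g

lemma exists_field [CharZero k] [Finite G] : ∃ S : Finset K, 4 * S.card ≤ (Nat.card G) ^ 2 ∧
    ∀ (V : Type _) [AddCommGroup V] [Module K V] [Module (MonoidAlgebra K G) V]
      [IsScalarTower K (MonoidAlgebra K G) V] [FiniteDimensional K V],
      RatBasis G (relClosure k (S : Set K)) V := by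
  classical
  have := Fintype.ofFinite G
  have hchar : CharZero K := charZero_of_injective_algebraMap (algebraMap k K).injective
  have hne : NeZero (Nat.card G : K) := ⟨by simp [Nat.card_eq_fintype_card]⟩
  have hfd : FiniteDimensional K (MonoidAlgebra K G) := inferInstance
  have hfdJ : ∀ J : Ideal (MonoidAlgebra K G), FiniteDimensional K J := fun J =>
    FiniteDimensional.of_injective (J.subtype.restrictScalars K) Subtype.val_injective
  obtain ⟨I, hI⟩ := exists_multfree (R := MonoidAlgebra K G)
  obtain ⟨S, hS, hspan⟩ := exists_coords (k := k) (coeffFun I) (coeffFun_inj I)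
  refine ⟨S, by rwa [Nat.card_eq_fintype_card], ?_⟩
  intro V _ _ _ _ _
  set L := relClosure k (S : Set K) with hL
  have hspan := hspan L (fun x hx => mem_relClosure_of_mem hx)
  have hsimple : ∀ M : Ideal (MonoidAlgebra K G), IsSimpleModule (MonoidAlgebra K G) M →
      RatBasis G L M := by
    intro M hM
    obtain ⟨e, he, hc, J, ⟨f⟩, hJ⟩ := hI M hM
    refine RatBasis.congr f.symm ?_
    have hmem : ∀ x : I, e * x.1 ∈ J := fun x => by
      rw [← SetLike.mem_coe, hJ]; exact ⟨x, x.2, rfl⟩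
    let T : I →ₗ[K] J :=
      { toFun := fun x => ⟨e * x.1, hmem x⟩
        map_add' := fun x y => Subtype.ext (mul_add _ _ _)
        map_smul' := fun c x => Subtype.ext (mul_smul_comm _ _ _) }
    have hT : LinearMap.range T = ⊤ := by
      rw [LinearMap.range_eq_top]
      rintro ⟨y, hy⟩
      have hy' := hy
      rw [← SetLike.mem_coe, hJ] at hy'
      obtain ⟨x, hx, hxy⟩ := hy'
      exact ⟨⟨x, hx⟩, Subtype.ext hxy⟩
    have hsp : Submodule.span K {x | ∀ i, coeffFun J i x ∈ L} = ⊤ := by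
      rw [eq_top_iff, ← hT, LinearMap.range_eq_map, ← hspan, Submodule.map_span,
        Submodule.span_le]
      rintro _ ⟨x, hx, rfl⟩
      refine Submodule.subset_span fun g => ?_
      change (e * x.1).coeff g ∈ L
      rw [MonoidAlgebra.coeff_mul_apply_left, Finsupp.sum]
      refine sum_mem fun h _ => mul_mem ?_ (hx _)
      exact mem_relClosure_of_isAlgebraic (coeff_isAlgebraic e he hc h)
    obtain ⟨m, b, hb⟩ := exists_rational_basis (coeffFun J) (coeffFun_inj J) L hsp
    refine ⟨m, b, fun g => hb (fun x => MonoidAlgebra.single g (1 : K) • x) fun x hx h => ?_⟩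
    change (MonoidAlgebra.single g (1 : K) * x.1).coeff h ∈ L
    rw [MonoidAlgebra.coeff_single_mul_apply, one_mul]
    exact hx _
  have hfin : Module.Finite (MonoidAlgebra K G) V := Module.Finite.of_restrictScalars_finite K _ V
  obtain ⟨n, s, e, hs⟩ := IsSemisimpleModule.exists_linearEquiv_fin_dfinsupp (MonoidAlgebra K G) V
  have e2 : V ≃ₗ[MonoidAlgebra K G] Π i, s i := e.trans DFinsupp.linearEquivFunOnFintype
  refine RatBasis.congr e2.symm (RatBasis.pi fun i => ?_)
  have := hs i
  obtain ⟨M, ⟨f⟩⟩ := IsSemisimpleRing.exists_linearEquiv_ideal_of_isSimpleModule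
    (MonoidAlgebra K G) (s i)
  have hM : IsSimpleModule (MonoidAlgebra K G) M := IsSimpleModule.congr f.symm
  exact RatBasis.congr f.symm (hsimple M hM)

lemma descends_of_ratBasis {n : ℕ} (ρ : G →* GL (Fin n) K) (r : Representation K G (Fin n → K))
    (hr : ∀ g v, r g v = (ρ g : Matrix (Fin n) (Fin n) K) *ᵥ v)
    (h : RatBasis G L r.asModule) : Descends ρ L := by
  classical
  obtain ⟨m, b, hb⟩ := h
  let b1 : Module.Basis (Fin m) K (Fin n → K) := b.map r.asModuleEquiv
  have hmn : m = n := by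
    have h1 := Module.finrank_eq_card_basis b1
    simpa using h1.symm
  subst hmn
  have hb1 : ∀ g i j, b1.repr ((ρ g : Matrix (Fin m) (Fin m) K) *ᵥ (b1 j)) i ∈ L := by
    intro g i j
    have h1 := hb g i j
    rw [← hr]
    rw [Representation.single_smul, one_smul] at h1
    exact h1
  let P : Matrix (Fin m) (Fin m) K := (Pi.basisFun K (Fin m)).toMatrix b1
  let Q : Matrix (Fin m) (Fin m) K := b1.toMatrix (Pi.basisFun K (Fin m))
  have hPQ : P * Q = 1 := Module.Basis.toMatrix_mul_toMatrix_flip _ _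
  have hQP : Q * P = 1 := Module.Basis.toMatrix_mul_toMatrix_flip _ _
  have hQ : ∀ v, Q *ᵥ v = b1.repr v := by
    intro v
    have h1 := b1.toMatrix_mulVec_repr (Pi.basisFun K (Fin m)) v
    change P *ᵥ _ = v at h1
    conv_lhs => rw [← h1]
    rw [Matrix.mulVec_mulVec, hQP, Matrix.one_mulVec]
  have hentry : ∀ g i j, (Q * (ρ g : Matrix (Fin m) (Fin m) K) * P) i j ∈ L := by
    intro g i j
    have h1 := hb1 g i j
    rw [← hQ] at h1
    have h2 : b1 j = P.col j := by
      ext a; simp [P, Module.Basis.toMatrix_apply, Matrix.col]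
    rw [h2, Matrix.mulVec_mulVec] at h1
    exact h1
  have hinj : Function.Injective ((algebraMap L K).mapMatrix (m := Fin m)) := by
    intro A B hAB
    ext i j
    exact congrFun (congrFun hAB i) j
  let f0 : G → Matrix (Fin m) (Fin m) L := fun g => Matrix.of fun i j => ⟨_, hentry g i j⟩
  have hf0 : ∀ g, (algebraMap L K).mapMatrix (f0 g) = Q * (ρ g : Matrix (Fin m) (Fin m) K) * P :=
    fun g => rfl
  let f : G →* Matrix (Fin m) (Fin m) L :=
    { toFun := f0
      map_one' := hinj (by rw [hf0, map_one, map_one]; simp [hQP])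
      map_mul' := fun g h => hinj (by
        rw [map_mul, hf0, hf0, hf0, map_mul, Units.val_mul]
        calc Q * (↑(ρ g) * ↑(ρ h)) * P = Q * ↑(ρ g) * 1 * ↑(ρ h) * P := by
              simp only [mul_assoc, one_mul]
          _ = _ := by rw [← hPQ]; simp only [mul_assoc]) }
  refine ⟨f.toHomUnits, ⟨P, Q, hPQ, hQP⟩, fun g => ?_⟩
  apply Units.ext
  change _ = P * (Q * (ρ g : Matrix (Fin m) (Fin m) K) * P) * Q
  calc (ρ g : Matrix (Fin m) (Fin m) K) = 1 * (ρ g : Matrix (Fin m) (Fin m) K) * 1 := by simp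
    _ = _ := by rw [← hPQ]; simp only [mul_assoc]
end

/-- Let `k` be a field of characteristic `0`, `K/k` a field extension, `G` a finite
group, and `ρ : G → GL_n(K)` an arbitrary finite-dimensional representation.  Then `ρ`
descends to an intermediate field `k ⊆ K₀ ⊆ K` of transcendence degree at most `|G|²/4`
over `k`. -/
theorem ed_rep_le {k : Type*} [Field k] [CharZero k]
    {K : Type*} [Field K] [Algebra k K]
    {G : Type*} [Group G] [Finite G] {n : ℕ}
    (ρ : G →* GL (Fin n) K) :
    ∃ K₀ : IntermediateField k K, Descends ρ K₀ ∧ FourTrdegLE K₀ ((Nat.card G) ^ 2) := by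
  obtain ⟨S, hS, h⟩ := exists_field (k := k) (K := K) (G := G)
  refine ⟨relClosure k (S : Set K), ?_, fourTrdeg_relClosure S _ hS⟩
  let r : Representation K G (Fin n → K) :=
    { toFun := fun g => Matrix.toLin' (ρ g : Matrix (Fin n) (Fin n) K)
      map_one' := by simp; rfl
      map_mul' := fun g h => by rw [map_mul, Units.val_mul, Matrix.toLin'_mul]; rfl }
  exact descends_of_ratBasis ρ r (fun g v => by simp [r]) (h r.asModule)
end

section
/- Let p₁, …, p_l be distinct prime numbers, each congruent to 3 modulo 4. For each i let ζ_{p_i} ∈ ℂ be a primitive p_i-th root of unity, and let k = ℚ(ζ_{p₁} + ζ_{p₁}^{-1}, …, ζ_{p_l} + ζ_{p_l}^{-1}) ⊆ ℂ. For each i let A_i be the quaternion algebra ((ζ_{p_i} − ζ_{p_i}^{-1})², −1) over k, i.e., the 4-dimensional k-algebra with generators x, y and relations x² = (ζ_{p_i} − ζ_{p_i}^{-1})², y² = −1, xy = −yx. Then the Brauer classes of A₁, …, A_l are linearly independent over ℤ/2ℤ in the Brauer group Br(k); equivalently, for every nonempty subset S ⊆ {1, …, l}, the tensor product ⊗_{i∈S}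 A_i over k is not Brauer-trivial (not isomorphic to a matrix algebra over k). -/
open Module

lemma qci_halve {k V : Type*} [Field k] [AddCommGroup V] [Module k V] [FiniteDimensional k V]
    (h2 : (2 : k) ≠ 0) (W : Submodule k V) (z x : Module.End k V) (c : k) (hc : c ≠ 0)
    (hz : z * z = 1) (hx : x * x = algebraMap k _ c) (hzx : z * x = -(x * z))
    (hWz : ∀ v ∈ W, z v ∈ W) (hWx : ∀ v ∈ W, x v ∈ W) :
    finrank k (W ⊓ LinearMap.ker (z - 1) : Submodule k V) * 2 = finrank k W := by
  have hz' : ∀ v, z (z v) = v := fun v => by simpa using LinearMap.congr_fun hz v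
  have hx' : ∀ v, x (x v) = c • v := fun v => by
    simpa using LinearMap.congr_fun hx v
  have hzx' : ∀ v, z (x v) = -x (z v) := fun v => by simpa using LinearMap.congr_fun hzx v
  have hinj : Function.Injective x := by
    intro u v h
    have := congrArg x h
    rw [hx', hx'] at this
    exact smul_right_injective V hc this
  set P := W ⊓ LinearMap.ker (z - 1) with hP
  set Q := W ⊓ LinearMap.ker (z + 1) with hQ
  have hmemP : ∀ v, v ∈ P ↔ v ∈ W ∧ z v = v := by
    intro v; simp [hP, sub_eq_zero]
  have hmemQ : ∀ v, v ∈ Q ↔ v ∈ W ∧ z v = -v := by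
    intro v; simp [hQ, add_eq_zero_iff_eq_neg]
  have h1 : finrank k P ≤ finrank k Q := by
    have : P.map x ≤ Q := by
      rintro _ ⟨v, hv, rfl⟩
      have hv' := (hmemP v).1 hv
      exact (hmemQ _).2 ⟨hWx v hv'.1, by rw [hzx', hv'.2]⟩
    calc finrank k P = finrank k (P.map x) := LinearEquiv.finrank_eq (Submodule.equivMapOfInjective x hinj P)
      _ ≤ _ := Submodule.finrank_mono this
  have h1' : finrank k Q ≤ finrank k P := by
    have : Q.map x ≤ P := by
      rintro _ ⟨v, hv, rfl⟩
      have hv' := (hmemQ v).1 hv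
      exact (hmemP _).2 ⟨hWx v hv'.1, by rw [hzx', hv'.2]; simp⟩
    calc finrank k Q = finrank k (Q.map x) := LinearEquiv.finrank_eq (Submodule.equivMapOfInjective x hinj Q)
      _ ≤ _ := Submodule.finrank_mono this
  have hsup : P ⊔ Q = W := by
    apply le_antisymm (sup_le inf_le_left inf_le_left)
    intro v hv
    have : v = (2:k)⁻¹ • (v + z v) + (2:k)⁻¹ • (v - z v) := by
      rw [← smul_add, show v + z v + (v - z v) = (2:k) • v by rw [two_smul]; abel, smul_smul,
        inv_mul_cancel₀ h2, one_smul]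
    rw [this]
    apply Submodule.add_mem_sup
    · apply Submodule.smul_mem
      rw [hmemP]; exact ⟨W.add_mem hv (hWz v hv), by rw [map_add, hz']; abel⟩
    · apply Submodule.smul_mem
      rw [hmemQ]; exact ⟨W.sub_mem hv (hWz v hv), by rw [map_sub, hz']; abel⟩
  have hinf : P ⊓ Q = ⊥ := by
    rw [eq_bot_iff]
    rintro v ⟨hv1, hv2⟩
    have e1 := ((hmemP v).1 hv1).2
    have e2 := ((hmemQ v).1 hv2).2
    rw [e1] at e2
    have : (2:k) • v = 0 := by rw [two_smul]; nth_rewrite 1 [e2]; simp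
    simpa [h2] using this
  have := Submodule.finrank_sup_add_finrank_inf_eq P Q
  rw [hsup, hinf, finrank_bot] at this
  omega

lemma qci_reduce {k V ι : Type*} [Field k] [AddCommGroup V] [Module k V] [FiniteDimensional k V]
    [DecidableEq ι]
    (h2 : (2 : k) ≠ 0) (x y : ι → Module.End k V) (a : ι → k) (ha : ∀ i, a i ≠ 0)
    (hx : ∀ i, x i * x i = algebraMap k _ (a i)) (hy : ∀ i, y i * y i = -1)
    (hxy : ∀ i, x i * y i = -(y i * x i))
    (hcxx : ∀ i j, i ≠ j → x i * x j = x j * x i)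
    (hcxy : ∀ i j, i ≠ j → x i * y j = y j * x i)
    (hcyy : ∀ i j, i ≠ j → y i * y j = y j * y i)
    (j0 : ι) (T : Finset ι) (hT : j0 ∉ T) :
    ∃ (W : Submodule k V) (X : Module.End k V),
      X * X = algebraMap k _ (a j0 * ∏ i ∈ T, a i) ∧ X * y j0 = -(y j0 * X) ∧
      (∀ i, i ∉ T → i ≠ j0 → X * x i = x i * X ∧ X * y i = y i * X) ∧
      (∀ v ∈ W, X v ∈ W) ∧ (∀ v ∈ W, y j0 v ∈ W) ∧
      (∀ i, i ∉ T → i ≠ j0 → ∀ v ∈ W, x i v ∈ W ∧ y i v ∈ W) ∧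
      finrank k W * 2 ^ T.card = finrank k V := by
  induction T using Finset.induction_on with
  | empty =>
    exact ⟨⊤, x j0, by simp [hx], hxy j0, fun i _ hi => ⟨hcxx _ _ hi.symm, hcxy _ _ hi.symm⟩,
      by simp, by simp, by simp, by simp⟩
  | insert j T hj ih =>
    have hj0 : j0 ∉ T := fun h => hT (Finset.mem_insert_of_mem h)
    have hjj : j ≠ j0 := fun h => hT (h ▸ Finset.mem_insert_self _ _)
    obtain ⟨W, X, hXX, hXy, hXc, hWX, hWy, hWc, hd⟩ := ih hj0
    obtain ⟨cx, cy⟩ := hXc j hj hjj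
    set z := y j0 * y j with hz
    have hzz : z * z = 1 := by
      calc z * z = (y j0 * (y j * y j0)) * y j := by rw [hz]; noncomm_ring
        _ = (y j0 * y j0) * (y j * y j) := by rw [hcyy j j0 hjj]; noncomm_ring
        _ = 1 := by rw [hy, hy]; simp
    have hzx : z * x j = -(x j * z) := by
      calc z * x j = -(y j0 * -(y j * x j)) := by rw [hz]; noncomm_ring
        _ = -(y j0 * x j * y j) := by rw [← hxy]; noncomm_ring
        _ = _ := by rw [← hcxy j j0 hjj, hz]; noncomm_ring
    have hmem : ∀ f : Module.End k V, z * f = f * z → (∀ v ∈ W, f v ∈ W) →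
        ∀ v ∈ W ⊓ LinearMap.ker (z - 1), f v ∈ W ⊓ LinearMap.ker (z - 1) := by
      rintro f hf hW v ⟨hv1, hv2⟩
      refine ⟨hW v hv1, ?_⟩
      have hv3 : z v = v := by simpa [sub_eq_zero] using hv2
      have := LinearMap.congr_fun hf v
      simp only [Module.End.mul_apply, hv3] at this
      simp [this]
    have hzX : z * (X * x j) = (X * x j) * z := by
      calc z * (X * x j) = y j0 * (y j * X) * x j := by rw [hz]; noncomm_ring
        _ = -(-(y j0 * X) * (y j * x j)) := by rw [← cy]; noncomm_ring
        _ = (X * y j0) * (-(y j * x j)) := by rw [← hXy]; noncomm_ring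
        _ = X * (y j0 * x j) * y j := by rw [← hxy]; noncomm_ring
        _ = _ := by rw [← hcxy j j0 hjj, hz]; noncomm_ring
    refine ⟨W ⊓ LinearMap.ker (z - 1), X * x j, ?_, ?_, ?_, ?_, ?_, ?_, ?_⟩
    · calc X * x j * (X * x j) = X * (x j * X) * x j := by noncomm_ring
        _ = (X * X) * (x j * x j) := by rw [← cx]; noncomm_ring
        _ = _ := by
          rw [hXX, hx, ← map_mul, Finset.prod_insert hj]; congr 1; ring
    · rw [mul_assoc, hcxy j j0 hjj, ← mul_assoc, hXy]; noncomm_ring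
    · intro i hi hij0
      have hij : i ≠ j := fun h => hi (h ▸ Finset.mem_insert_self _ _)
      have hiT : i ∉ T := fun h => hi (Finset.mem_insert_of_mem h)
      obtain ⟨c1, c2⟩ := hXc i hiT hij0
      constructor
      · rw [mul_assoc, hcxx j i hij.symm, ← mul_assoc, c1, mul_assoc]
      · rw [mul_assoc, hcxy j i hij.symm, ← mul_assoc, c2, mul_assoc]
    · exact hmem _ hzX fun v hv => hWX _ (hWc j hj hjj v hv).1
    · refine hmem _ ?_ hWy
      rw [hz, mul_assoc, hcyy j j0 hjj]
    · intro i hi hij0 v hv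
      have hij : i ≠ j := fun h => hi (h ▸ Finset.mem_insert_self _ _)
      have hiT : i ∉ T := fun h => hi (Finset.mem_insert_of_mem h)
      constructor
      · refine hmem _ ?_ (fun v hv => (hWc i hiT hij0 v hv).1) v hv
        rw [hz, mul_assoc, ← hcxy i j hij, ← mul_assoc, ← hcxy i j0 hij0, mul_assoc]
      · refine hmem _ ?_ (fun v hv => (hWc i hiT hij0 v hv).2) v hv
        rw [hz, mul_assoc, hcyy j i hij.symm, ← mul_assoc, hcyy j0 i hij0.symm, mul_assoc]
    · have := qci_halve h2 W z (x j) (a j) (ha j) hzz (hx j) hzx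
        (fun v hv => hWy _ (hWc j hj hjj v hv).2) (fun v hv => (hWc j hj hjj v hv).1)
      rw [Finset.card_insert_of_notMem hj, pow_succ, mul_comm (2 ^ _) 2, ← mul_assoc, this, hd]

lemma qci_linalg {k V ι : Type*} [Field k] [AddCommGroup V] [Module k V] [FiniteDimensional k V]
    [DecidableEq ι] [Fintype ι]
    (h2 : (2 : k) ≠ 0) (hm1 : ∀ c : k, c * c ≠ -1)
    (x y : ι → Module.End k V) (a : ι → k) (ha : ∀ i, a i ≠ 0)
    (hx : ∀ i, x i * x i = algebraMap k _ (a i)) (hy : ∀ i, y i * y i = -1)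
    (hxy : ∀ i, x i * y i = -(y i * x i))
    (hcxx : ∀ i j, i ≠ j → x i * x j = x j * x i)
    (hcxy : ∀ i j, i ≠ j → x i * y j = y j * x i)
    (hcyy : ∀ i j, i ≠ j → y i * y j = y j * y i)
    (j0 : ι) (hV : finrank k V = 2 ^ Fintype.card ι) :
    ∃ c d : k, ∏ i, a i = c ^ 2 + d ^ 2 := by
  obtain ⟨W, X, hXX, hXy, -, hWX, hWy, -, hd⟩ := qci_reduce h2 x y a ha hx hy hxy hcxx hcxy hcyy
    j0 (Finset.univ.erase j0) (by simp)
  rw [Finset.mul_prod_erase _ _ (Finset.mem_univ j0)] at hXX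
  have hW : finrank k W = 2 := by
    have h0 : 0 < Fintype.card ι := Fintype.card_pos_iff.2 ⟨j0⟩
    rw [hV, Finset.card_erase_of_mem (Finset.mem_univ j0), Finset.card_univ,
      show Fintype.card ι = (Fintype.card ι - 1) + 1 by omega, pow_succ, Nat.add_sub_cancel,
      mul_comm] at hd
    exact Nat.eq_of_mul_eq_mul_left (by positivity) hd
  obtain ⟨⟨v, hvW⟩, hv⟩ := (finrank_pos_iff_exists_ne_zero (R := k) (M := W)).1 (by omega)
  have hv0 : v ≠ 0 := by simpa using hv
  have hyy : y j0 (y j0 v) = -v := by simpa using LinearMap.congr_fun (hy j0) v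
  have hli : LinearIndependent k ![v, y j0 v] := by
    rw [LinearIndependent.pair_iff' hv0]
    intro c hc
    have : (c * c) • v = (-1 : k) • v := by
      rw [mul_smul, hc, ← map_smul, hc, hyy]; simp
    exact hm1 c (smul_left_injective k hv0 this)
  have hspan : Submodule.span k (Set.range ![v, y j0 v]) = W := by
    apply Submodule.eq_of_le_of_finrank_eq
    · rw [Submodule.span_le]
      rintro _ ⟨i, rfl⟩
      fin_cases i
      · exact hvW
      · exact hWy v hvW
    · rw [finrank_span_eq_card hli, hW]; simp
  have hXv := hWX v hvW
  rw [← hspan, Matrix.range_cons, Matrix.range_cons, Matrix.range_empty, Set.union_empty,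
    Set.singleton_union, Submodule.mem_span_pair] at hXv
  obtain ⟨c, d, hcd⟩ := hXv
  refine ⟨c, d, ?_⟩
  have e1 : X (X v) = (∏ i, a i) • v := by simpa using LinearMap.congr_fun hXX v
  have e2 : X (y j0 v) = -(y j0 (X v)) := by simpa using LinearMap.congr_fun hXy v
  have e3 : X (X v) = (c ^ 2 + d ^ 2) • v := by
    conv_lhs => rw [← hcd]
    rw [map_add, map_smul, map_smul, e2, ← hcd, map_add, map_smul, map_smul, hyy]
    module
  exact smul_left_injective k hv0 (e1.symm.trans e3)

open scoped Quaternion TensorProduct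

lemma qci_tensor {k ι : Type*} [Field k] [Fintype ι] [DecidableEq ι] (h2 : (2 : k) ≠ 0)
    (hm1 : ∀ c : k, c * c ≠ -1) (a : ι → k) (ha : ∀ i, a i ≠ 0) (j0 : ι) (m : ℕ)
    (e : (⨂[k] i : ι, ℍ[k, a i, -1]) ≃ₐ[k] Matrix (Fin m) (Fin m) k) :
    ∃ c d : k, ∏ i, a i = c ^ 2 + d ^ 2 := by
  have hm : m = 2 ^ Fintype.card ι := by
    have h1 := e.toLinearEquiv.finrank_eq
    rw [Module.finrank_matrix, Module.finrank_eq_card_basis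
      (Basis.piTensorProduct fun i => QuaternionAlgebra.basisOneIJK (a i) 0 (-1))] at h1
    simp only [Fintype.card_pi, Fintype.card_fin, Finset.prod_const, Finset.card_univ,
      Module.finrank_self, mul_one] at h1
    have : m ^ 2 = (2 ^ Fintype.card ι) ^ 2 := by
      rw [sq, ← h1, ← pow_mul, mul_comm, pow_mul]; norm_num
    exact Nat.pow_left_injective (by norm_num) this
  let f : (i : ι) → ℍ[k, a i, -1] →ₐ[k] Module.End k (Fin m → k) := fun i =>
    (Matrix.toLinAlgEquiv' (R := k) (n := Fin m)).toAlgHom.comp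
      (e.toAlgHom.comp (PiTensorProduct.singleAlgHom (R := k) (A := fun i => ℍ[k, a i, -1]) i))
  have hcomm : ∀ i j, i ≠ j → ∀ u v, f i u * f j v = f j v * f i u := by
    intro i j hij u v
    have : Commute (PiTensorProduct.singleAlgHom (R := k) (A := fun i => ℍ[k, a i, -1]) i u)
      (PiTensorProduct.singleAlgHom (R := k) (A := fun i => ℍ[k, a i, -1]) j v) := by
      simp only [PiTensorProduct.singleAlgHom_apply]
      apply Commute.tprod
      exact Pi.mulSingle_commute (f := fun i => ℍ[k, a i, -1]) hij u v
    simp only [f, AlgHom.comp_apply]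
    rw [← map_mul, ← map_mul, this.eq, map_mul, map_mul]
  refine qci_linalg h2 hm1 (fun i => f i ⟨0, 1, 0, 0⟩) (fun i => f i ⟨0, 0, 1, 0⟩) a ha
    ?_ ?_ ?_ (fun i j h => hcomm i j h _ _) (fun i j h => hcomm i j h _ _)
    (fun i j h => hcomm i j h _ _) j0 (by simp [hm])
  · intro i
    rw [← map_mul, ← AlgHom.commutes (f i)]
    congr 1
    ext <;> simp [QuaternionAlgebra.algebraMap_eq]
  · intro i
    rw [← map_mul, ← map_one (f i), ← map_neg]
    congr 1
    ext <;> simp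
  · intro i
    rw [← map_mul, ← map_mul, ← map_neg]
    congr 1
    ext <;> simp

lemma qci_det {n : Type*} [Fintype n] [DecidableEq n] (A B : Matrix n n ℚ) (h : A * B = B * A) :
    ∃ u v : ℚ, (A * A + B * B).det = u ^ 2 + v ^ 2 := by
  let R : Subring ℂ :=
    { carrier := {z | ∃ u v : ℚ, z = u + v * Complex.I}
      mul_mem' := by
        rintro _ _ ⟨u, v, rfl⟩ ⟨s, t, rfl⟩
        refine ⟨u * s - v * t, u * t + v * s, ?_⟩
        push_cast
        linear_combination (v * t : ℂ) * Complex.I_sq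
      one_mem' := ⟨1, 0, by simp⟩
      add_mem' := by
        rintro _ _ ⟨u, v, rfl⟩ ⟨s, t, rfl⟩
        exact ⟨u + s, v + t, by push_cast; ring⟩
      zero_mem' := ⟨0, 0, by simp⟩
      neg_mem' := by
        rintro _ ⟨u, v, rfl⟩
        exact ⟨-u, -v, by push_cast; ring⟩ }
  let φ : ℚ →+* ℂ := algebraMap ℚ ℂ
  let C : Matrix n n ℂ := A.map φ + Complex.I • B.map φ
  let D : Matrix n n ℂ := A.map φ - Complex.I • B.map φ
  have hCR : C.det ∈ R := by
    rw [Matrix.det_apply]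
    refine R.sum_mem fun σ _ => ?_
    rw [Units.smul_def]
    refine R.zsmul_mem (R.prod_mem fun i _ => ?_) _
    exact ⟨A (σ i) i, B (σ i) i, by simp [C, φ, mul_comm]⟩
  have hconj : D.det = (starRingEnd ℂ) C.det := by
    rw [RingHom.map_det]
    congr 1
    ext i j
    simp [C, D, φ, sub_eq_add_neg]
  have hAB : A.map φ * B.map φ = B.map φ * A.map φ := by
    rw [← Matrix.map_mul, h, Matrix.map_mul]
  have hCD : C * D = (A * A + B * B).map φ := by
    rw [Matrix.map_add _ (map_add φ), Matrix.map_mul, Matrix.map_mul]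
    simp only [C, D, add_mul, mul_sub, Matrix.mul_smul, Matrix.smul_mul, smul_smul, hAB,
      Complex.I_mul_I]
    simp only [neg_smul, one_smul]
    abel
  obtain ⟨u, v, huv⟩ := hCR
  refine ⟨u, v, ?_⟩
  have h1 : ((A * A + B * B).det : ℂ) = C.det * D.det := by
    rw [← Matrix.det_mul, hCD]
    exact RingHom.map_det φ _
  rw [hconj, huv] at h1
  have : ((A * A + B * B).det : ℂ) = ((u ^ 2 + v ^ 2 : ℚ) : ℂ) := by
    rw [h1]; simp
    linear_combination (-(v:ℂ)^2) * Complex.I_sq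
  exact_mod_cast this

lemma qci_norm_sq {K : Type*} [Field K] [Algebra ℚ K] [FiniteDimensional ℚ K] (c d : K) :
    ∃ u v : ℚ, Algebra.norm ℚ (c ^ 2 + d ^ 2) = u ^ 2 + v ^ 2 := by
  classical
  let b := Module.finBasis ℚ K
  obtain ⟨u, v, h⟩ := qci_det (Algebra.leftMulMatrix b c) (Algebra.leftMulMatrix b d)
    (by rw [← map_mul, mul_comm, map_mul])
  refine ⟨u, v, ?_⟩
  rw [← h, Algebra.norm_eq_matrix_det b, ← map_mul, ← map_mul, ← map_add, sq, sq]

/-- A signed product of odd powers of distinct primes `≡ 3 mod 4` is not a sum of two squares. -/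
lemma qci_not_sum {ι : Type*} (S : Finset ι) (hS : S.Nonempty) (p : ι → ℕ)
    (hp : ∀ i, (p i).Prime) (hp3 : ∀ i, p i % 4 = 3) (hinj : Function.Injective p)
    (e : ι → ℕ) (he : ∀ i, Odd (e i)) (N : ι → ℚ) (hN : ∀ i, N i = p i ^ e i ∨ N i = -p i ^ e i)
    (u v : ℚ) (h : ∏ i ∈ S, N i = u ^ 2 + v ^ 2) : False := by
  classical
  obtain ⟨i0, hi0⟩ := hS
  have habs : ∏ i ∈ S, ((p i : ℚ) ^ e i) = u ^ 2 + v ^ 2 := by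
    rw [← abs_of_nonneg (show 0 ≤ u ^ 2 + v ^ 2 by positivity), ← h, Finset.abs_prod]
    refine Finset.prod_congr rfl fun i _ => ?_
    rcases hN i with h | h <;> rw [h] <;> simp
  set C : ℕ := u.den * v.den with hC
  have hC0 : C ≠ 0 := by positivity
  have hnat : (∏ i ∈ S, p i ^ e i) * C ^ 2 =
      (u.num.natAbs * v.den) ^ 2 + (v.num.natAbs * u.den) ^ 2 := by
    have hu : (u : ℚ) * u.den = u.num := Rat.mul_den_eq_num u
    have hv : (v : ℚ) * v.den = v.num := Rat.mul_den_eq_num v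
    have : ((∏ i ∈ S, p i ^ e i : ℕ) : ℚ) * (C : ℚ) ^ 2 =
      (u.num * v.den) ^ 2 + (v.num * u.den) ^ 2 := by
      push_cast
      rw [habs, hC, ← hu, ← hv]; push_cast; ring
    have h' : (((∏ i ∈ S, p i ^ e i) * C ^ 2 : ℕ) : ℤ) =
      (u.num * v.den) ^ 2 + (v.num * u.den) ^ 2 := by
      exact_mod_cast this
    zify
    rw [mul_pow, mul_pow, sq_abs, sq_abs, ← mul_pow, ← mul_pow, ← h']
    push_cast; rfl
  have key := Nat.eq_sq_add_sq_iff.1 ⟨_, _, hnat⟩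
  have hpi := hp i0
  have : Fact (p i0).Prime := ⟨hpi⟩
  have hprod0 : ∏ i ∈ S, p i ^ e i ≠ 0 :=
    Finset.prod_ne_zero_iff.2 fun i _ => pow_ne_zero _ (hp i).ne_zero
  have hev := key (q := p i0) (by
    rw [Nat.mem_primeFactors]
    refine ⟨hpi, ?_, mul_ne_zero hprod0 (pow_ne_zero _ hC0)⟩
    exact Dvd.dvd.mul_right ((dvd_pow_self _ (he i0).pos.ne').trans
      (Finset.dvd_prod_of_mem (fun i => p i ^ e i) hi0)) _) (hp3 i0)
  rw [padicValNat.mul hprod0 (pow_ne_zero _ hC0), padicValNat.pow,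
    ← Finset.mul_prod_erase _ _ hi0, padicValNat.mul (pow_ne_zero _ hpi.ne_zero)
      (Finset.prod_ne_zero_iff.2 fun i _ => pow_ne_zero _ (hp i).ne_zero),
    padicValNat.prime_pow, padicValNat.eq_zero_of_not_dvd (n := ∏ _ ∈ _, _)] at hev
  · have := he i0
    rw [add_zero, Nat.even_add] at hev
    have h3 := hev.2 (even_two_mul _)
    exact (Nat.not_even_iff_odd.2 this) h3
  · rw [hpi.prime.dvd_finsetProd_iff]
    rintro ⟨i, hi, hdvd⟩
    have := (Nat.prime_dvd_prime_iff_eq hpi (hp i)).1 (hpi.dvd_of_dvd_pow hdvd)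
    exact (Finset.ne_of_mem_erase hi) (hinj this).symm

section RatAlg

open IntermediateField

/-- Prefer the algebra structure of an intermediate field over the generic rational one. -/
abbrev qciAlg {L : Type*} [Field L] [Algebra ℚ L] (F : IntermediateField ℚ L) : Algebra ℚ F :=
  IntermediateField.algebra' F

attribute [local instance] qciAlg

lemma qci_cyc {K L : Type*} [Field K] [Field L] [Algebra K L] {n : ℕ} [NeZero n] {z : L}
    (hz : IsPrimitiveRoot z n) : IsCyclotomicExtension {n} K K⟮z⟯ := by
  change IsCyclotomicExtension {n} K K⟮z⟯.toSubalgebra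
  rw [IntermediateField.adjoin_simple_toSubalgebra_of_isAlgebraic
    (hz.isIntegral (NeZero.pos n)).tower_top.isAlgebraic]
  exact hz.adjoin_isCyclotomicExtension K

lemma qci_norm_cyc {M : Type*} [Field M] [Algebra ℚ M] [FiniteDimensional ℚ M] (p : ℕ)
    (hp : p.Prime) (hp2 : p ≠ 2) (z : M) (hz : IsPrimitiveRoot z p) :
    ∃ e : ℕ, (p - 1) * e = finrank ℚ M ∧ Algebra.norm ℚ (z - z⁻¹) = (p : ℚ) ^ e := by
  have : Fact p.Prime := ⟨hp⟩
  have : NeZero p := ⟨hp.ne_zero⟩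
  have hcyc : IsCyclotomicExtension {p} ℚ ℚ⟮z⟯ :=
    qci_cyc hz
  have hirr : Irreducible (Polynomial.cyclotomic p ℚ) :=
    Polynomial.cyclotomic.irreducible_rat hp.pos
  set g : ℚ⟮z⟯ := AdjoinSimple.gen ℚ z with hg
  have hgz : algebraMap ℚ⟮z⟯ M g = z := AdjoinSimple.algebraMap_gen ℚ z
  have hgp : IsPrimitiveRoot g p :=
    IsPrimitiveRoot.of_map_of_injective (f := algebraMap ℚ⟮z⟯ M) (by rwa [hgz])
      (algebraMap ℚ⟮z⟯ M).injective
  refine ⟨finrank ℚ⟮z⟯ M, ?_, ?_⟩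
  · rw [← Module.finrank_mul_finrank ℚ ℚ⟮z⟯ M, IsCyclotomicExtension.finrank (n := p) ℚ⟮z⟯ hirr,
      Nat.totient_prime hp]
  · have h2 : IsPrimitiveRoot (g ^ 2) p :=
      hgp.pow_of_coprime 2 ((Nat.coprime_primes Nat.prime_two hp).2 hp2.symm)
    have hn : Algebra.norm ℚ (g - g⁻¹) = p := by
      have hg0 : g ≠ 0 := hgp.ne_zero hp.ne_zero
      have : g - g⁻¹ = g⁻¹ * (g ^ 2 - 1) := by field_simp
      rw [this, map_mul, h2.norm_sub_one_of_prime_ne_two' hirr hp2,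
        hgp.inv.norm_eq_one hp2 hirr, one_mul]
    have : z - z⁻¹ = algebraMap ℚ⟮z⟯ M (g - g⁻¹) := by rw [map_sub, map_inv₀, hgz]
    rw [this, ← Algebra.norm_norm (R := ℚ) (S := ℚ⟮z⟯), Algebra.norm_algebraMap, map_pow, hn]

lemma qci_quad (F : IntermediateField ℚ ℂ) (hF : ∀ x ∈ F, x.im = 0) (z : ℂ) (hz : z.im ≠ 0)
    (hzF : z + z⁻¹ ∈ F) : FiniteDimensional F F⟮z⟯ ∧ finrank F F⟮z⟯ = 2 := by
  have hz0 : z ≠ 0 := by rintro rfl; simp at hz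
  let P : Polynomial F := Polynomial.X ^ 2 - Polynomial.C ⟨z + z⁻¹, hzF⟩ * Polynomial.X + 1
  have hdeg : P.natDegree = 2 := by simp only [P]; compute_degree!
  have hmon : P.Monic := by simp only [P]; monicity!
  have hev : Polynomial.aeval z P = 0 := by
    have : algebraMap F ℂ ⟨z + z⁻¹, hzF⟩ = z + z⁻¹ := rfl
    simp only [P, map_add, map_sub, map_mul, map_pow, Polynomial.aeval_X, Polynomial.aeval_C, this,
      map_one]
    field_simp
    ring
  have hint : IsIntegral F z := ⟨P, hmon, hev⟩
  refine ⟨adjoin.finiteDimensional hint, ?_⟩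
  rw [adjoin.finrank hint]
  apply le_antisymm
  · rw [← hdeg]; exact Polynomial.natDegree_le_of_dvd (minpoly.dvd F z hev) hmon.ne_zero
  · rw [minpoly.two_le_natDegree_iff hint]
    rintro ⟨x, hx⟩
    exact hz (hx ▸ hF _ x.2)

lemma qci_prim_im (p : ℕ) (hp : p.Prime) (hp2 : p ≠ 2) (z : ℂ) (hz : IsPrimitiveRoot z p) :
    z.im ≠ 0 ∧ (z + z⁻¹).im = 0 := by
  have hn : ‖z‖ = 1 := Complex.norm_eq_one_of_pow_eq_one hz.pow_eq_one hp.ne_zero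
  have hinv : z⁻¹ = (starRingEnd ℂ) z := Complex.inv_eq_conj hn
  refine ⟨fun h => ?_, by simp [hinv]⟩
  have hc : (starRingEnd ℂ) z = z := Complex.conj_eq_iff_im.2 h
  have h1 : z ^ 2 = 1 := by
    have hz0 : z ≠ 0 := hz.ne_zero hp.ne_zero
    rw [sq]; nth_rewrite 1 [← hc]; rw [← hinv, inv_mul_cancel₀ hz0]
  have := hz.dvd_of_pow_eq_one 2 h1
  exact hp2 ((Nat.prime_dvd_prime_iff_eq hp Nat.prime_two).1 this)

lemma qci_norm_a (F : IntermediateField ℚ ℂ) [FiniteDimensional ℚ F] (hF : ∀ x ∈ F, x.im = 0)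
    (p : ℕ) (hp : p.Prime) (hp2 : p ≠ 2) (z : ℂ) (hz : IsPrimitiveRoot z p) (hzF : z + z⁻¹ ∈ F)
    (a : F) (ha : (a : ℂ) = (z - z⁻¹) ^ 2) :
    ∃ e : ℕ, (p - 1) * e = finrank ℚ F * 2 ∧
      (Algebra.norm ℚ a = (p : ℚ) ^ e ∨ Algebra.norm ℚ a = -(p : ℚ) ^ e) := by
  obtain ⟨hfd, h2⟩ := qci_quad F hF z (qci_prim_im p hp hp2 z hz).1 hzF
  set g : F⟮z⟯ := AdjoinSimple.gen F z with hg
  have hgz : algebraMap F⟮z⟯ ℂ g = z := AdjoinSimple.algebraMap_gen F z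
  have hgp : IsPrimitiveRoot g p :=
    IsPrimitiveRoot.of_map_of_injective (f := algebraMap F⟮z⟯ ℂ) (by rwa [hgz])
      (algebraMap F⟮z⟯ ℂ).injective
  have : FiniteDimensional ℚ F⟮z⟯ := FiniteDimensional.trans ℚ F F⟮z⟯
  obtain ⟨e, he, hn⟩ := qci_norm_cyc p hp hp2 g hgp
  refine ⟨e, by rw [he, ← Module.finrank_mul_finrank ℚ F F⟮z⟯, h2], ?_⟩
  apply sq_eq_sq_iff_eq_or_eq_neg.1
  have hag : algebraMap F F⟮z⟯ a = (g - g⁻¹) ^ 2 := by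
    apply (algebraMap F⟮z⟯ ℂ).injective
    rw [map_pow, map_sub, map_inv₀, hgz, ← ha]; rfl
  rw [← hn, ← map_pow (Algebra.norm ℚ) (g - g⁻¹), ← hag, ← Algebra.norm_norm (R := ℚ) (S := F) (a := algebraMap F F⟮z⟯ a),
    Algebra.norm_algebraMap, h2, map_pow]

lemma qci_real_adjoin (s : Set ℂ) (hs : ∀ x ∈ s, x.im = 0) :
    ∀ x ∈ IntermediateField.adjoin ℚ s, x.im = 0 := by
  have : IntermediateField.adjoin ℚ s ≤ (Complex.ofRealAm.restrictScalars ℚ).fieldRange := by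
    rw [adjoin_le_iff]
    intro x hx
    exact ⟨x.re, Complex.ext (by simp) (by simp [hs x hx])⟩
  intro x hx
  obtain ⟨r, rfl⟩ := this hx
  simp

lemma qci_odd_one (p : ℕ) (hp : p.Prime) (hp3 : p % 4 = 3) (z : ℂ) (hz : IsPrimitiveRoot z p) :
    Odd (finrank ℚ ℚ⟮z + z⁻¹⟯) := by
  have hp2 : p ≠ 2 := by rintro rfl; simp at hp3
  have : NeZero p := ⟨hp.ne_zero⟩
  obtain ⟨him, hre⟩ := qci_prim_im p hp hp2 z hz
  obtain ⟨hfd, h2⟩ := qci_quad ℚ⟮z + z⁻¹⟯ (qci_real_adjoin _ (by simpa using hre)) z him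
    (mem_adjoin_simple_self ℚ _)
  have heq : IntermediateField.restrictScalars ℚ ℚ⟮z + z⁻¹⟯⟮z⟯ = ℚ⟮z⟯ := by
    apply le_antisymm
    · have hm : z ∈ ℚ⟮z⟯ := mem_adjoin_simple_self ℚ z
      have hm' : z + z⁻¹ ∈ ℚ⟮z⟯ := add_mem hm (inv_mem hm)
      rw [adjoin_simple_adjoin_simple, adjoin_le_iff]
      rintro x (rfl | rfl)
      · exact hm'
      · exact hm
    · rw [adjoin_simple_le_iff]
      exact mem_adjoin_simple_self _ z
  have hcyc : IsCyclotomicExtension {p} ℚ ℚ⟮z⟯ :=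
    qci_cyc hz
  have h3 : finrank ℚ ℚ⟮z⟯ = p - 1 := by
    rw [IsCyclotomicExtension.finrank (n := p) ℚ⟮z⟯ (Polynomial.cyclotomic.irreducible_rat hp.pos),
      Nat.totient_prime hp]
  have h4 : finrank ℚ ℚ⟮z + z⁻¹⟯ * 2 = p - 1 := by
    rw [← h3, ← heq, ← h2]
    exact Module.finrank_mul_finrank ℚ ℚ⟮z + z⁻¹⟯ ℚ⟮z + z⁻¹⟯⟮z⟯
  rw [Nat.odd_iff]
  omega

lemma qci_odd {l : ℕ} (p : Fin l → ℕ)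
    (hp : ∀ i, Nat.Prime (p i)) (hp3 : ∀ i, p i % 4 = 3)
    (ζ : Fin l → ℂ) (hζ : ∀ i, IsPrimitiveRoot (ζ i) (p i))
    (k : IntermediateField ℚ ℂ)
    (hk : k = IntermediateField.adjoin ℚ (Set.range fun i => ζ i + (ζ i)⁻¹)) :
    FiniteDimensional ℚ k ∧ Odd (finrank ℚ k) := by
  set n := ∏ i, p i with hn
  have hn0 : n ≠ 0 := Finset.prod_ne_zero_iff.2 fun i _ => (hp i).ne_zero
  have : NeZero n := ⟨hn0⟩
  obtain ⟨ξ, hξ⟩ : ∃ ξ : ℂ, IsPrimitiveRoot ξ n := ⟨_, Complex.isPrimitiveRoot_exp n hn0⟩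
  have hcyc : IsCyclotomicExtension {n} ℚ ℚ⟮ξ⟯ :=
    qci_cyc hξ
  have hab : IsAbelianGalois ℚ ℚ⟮ξ⟯ := IsCyclotomicExtension.isAbelianGalois {n} ℚ ℚ⟮ξ⟯
  have hfin : FiniteDimensional ℚ ℚ⟮ξ⟯ := IsCyclotomicExtension.finiteDimensional {n} ℚ ℚ⟮ξ⟯
  have hle : k ≤ ℚ⟮ξ⟯ := by
    rw [hk, adjoin_le_iff]
    rintro _ ⟨i, rfl⟩
    have : ζ i ∈ ℚ⟮ξ⟯ := by
      obtain ⟨j, -, hj⟩ := hξ.eq_pow_of_pow_eq_one (ξ := ζ i) (by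
        obtain ⟨c, hc⟩ := Finset.dvd_prod_of_mem p (Finset.mem_univ i)
        rw [hn, hc, pow_mul, (hζ i).pow_eq_one, one_pow])
      rw [← hj]; exact pow_mem (mem_adjoin_simple_self ℚ ξ) j
    exact add_mem this (inv_mem this)
  have hkab : IsAbelianGalois ℚ k := IsAbelianGalois.of_algHom (IntermediateField.inclusion hle)
  have hkfin : FiniteDimensional ℚ k :=
    FiniteDimensional.of_injective (IntermediateField.inclusion hle).toLinearMap
      (IntermediateField.inclusion hle).injective
  refine ⟨hkfin, ?_⟩
  by_contra hodd
  rw [Nat.not_odd_iff_even, even_iff_two_dvd, ← IsGalois.card_aut_eq_finrank] at hodd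
  have : Fact (Nat.Prime 2) := ⟨Nat.prime_two⟩
  obtain ⟨σ, hσ⟩ := exists_prime_orderOf_dvd_card' 2 hodd
  have hα : ∀ i, ζ i + (ζ i)⁻¹ ∈ k := fun i => hk ▸ subset_adjoin ℚ _ ⟨i, rfl⟩
  have hfix : ∀ i, σ ⟨_, hα i⟩ = ⟨_, hα i⟩ := by
    intro i
    set α : k := ⟨_, hα i⟩ with hαdef
    have hfr : Odd (finrank ℚ ℚ⟮α⟯) := by
      have h := qci_odd_one (p i) (hp i) (hp3 i) (ζ i) (hζ i)
      have hint : IsIntegral ℚ α := Algebra.IsIntegral.isIntegral α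
      have hmap : algebraMap k ℂ α = ζ i + (ζ i)⁻¹ := rfl
      rw [adjoin.finrank hint, ← minpoly.algebraMap_eq (algebraMap k ℂ).injective, hmap,
        ← adjoin.finrank (by rw [← hmap]; exact hint.map (IsScalarTower.toAlgHom ℚ k ℂ))]
      exact h
    have hτ : (AlgEquiv.restrictNormalHom ℚ⟮α⟯ σ) = 1 := by
      rw [← orderOf_eq_one_iff]
      have h1 : orderOf (AlgEquiv.restrictNormalHom ℚ⟮α⟯ σ) ∣ 2 := hσ ▸ orderOf_map_dvd _ σ
      have h2 : orderOf (AlgEquiv.restrictNormalHom ℚ⟮α⟯ σ) ∣ finrank ℚ ℚ⟮α⟯ := by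
        rw [← IsGalois.card_aut_eq_finrank]; exact orderOf_dvd_natCard _
      have := Nat.dvd_gcd h1 h2
      rwa [(Nat.coprime_two_left).2 hfr, Nat.dvd_one] at this
    have := AlgEquiv.restrictNormal_commutes σ ℚ⟮α⟯ (AdjoinSimple.gen ℚ α)
    rw [AdjoinSimple.algebraMap_gen] at this
    rw [← this]
    have h3 : σ.restrictNormal ℚ⟮α⟯ = 1 := hτ
    rw [h3]; simp
  have : σ = 1 := by
    let E : IntermediateField ℚ k := IntermediateField.fixedField (Subgroup.zpowers σ)
    have hE : k ≤ E.map k.val := by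
      conv_lhs => rw [hk]
      rw [adjoin_le_iff]
      rintro _ ⟨i, rfl⟩
      refine ⟨⟨_, hα i⟩, ?_, rfl⟩
      rintro ⟨τ, hτ⟩
      have : Subgroup.zpowers σ ≤ MulAction.stabilizer Gal(k/ℚ) (⟨_, hα i⟩ : k) := by
        rw [Subgroup.zpowers_le]; exact hfix i
      exact this hτ
    ext x
    obtain ⟨y, hy, hyx⟩ := hE x.2
    have : y = x := Subtype.ext hyx
    subst this
    have := hy ⟨σ, Subgroup.mem_zpowers σ⟩
    exact congrArg Subtype.val this
  rw [this, orderOf_one] at hσ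
  norm_num at hσ

lemma qci_final {l : ℕ} (p : Fin l → ℕ)
    (hp : ∀ i, Nat.Prime (p i)) (hp3 : ∀ i, p i % 4 = 3) (hdist : Function.Injective p)
    (ζ : Fin l → ℂ) (hζ : ∀ i, IsPrimitiveRoot (ζ i) (p i))
    (k : IntermediateField ℚ ℂ)
    (hk : k = IntermediateField.adjoin ℚ (Set.range fun i => ζ i + (ζ i)⁻¹))
    (a : Fin l → k) (ha : ∀ i, (a i : ℂ) = (ζ i - (ζ i)⁻¹) ^ 2) (hreal : ∀ x ∈ k, x.im = 0)
    (S : Finset (Fin l)) (hS : S.Nonempty) (c d : k) (h : ∏ i ∈ S, a i = c ^ 2 + d ^ 2) :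
    False := by
  obtain ⟨hfin, hodd⟩ := qci_odd p hp hp3 ζ hζ k hk
  have hα : ∀ i, ζ i + (ζ i)⁻¹ ∈ k := fun i => hk ▸ subset_adjoin ℚ _ ⟨i, rfl⟩
  have hp2 : ∀ i, p i ≠ 2 := fun i h => by have := hp3 i; rw [h] at this; simp at this
  choose e he hN using fun i =>
    qci_norm_a k hreal (p i) (hp i) (hp2 i) (ζ i) (hζ i) (hα i) (a i) (ha i)
  obtain ⟨u, v, huv⟩ := qci_norm_sq c d
  refine qci_not_sum S hS p hp hp3 hdist e (fun i => ?_) (fun i => Algebra.norm ℚ (a i)) hN u v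
    (by rw [← huv, ← h, map_prod])
  have h1 := he i
  have h3 := hp3 i
  obtain ⟨q, hq⟩ : ∃ q, p i - 1 = 2 * q := ⟨(p i - 1) / 2, by omega⟩
  rw [hq, mul_assoc, mul_comm (finrank ℚ k)] at h1
  have h4 : q * e i = finrank ℚ k := Nat.eq_of_mul_eq_mul_left two_pos h1
  rw [← h4, Nat.odd_mul] at hodd
  exact hodd.2

end RatAlg

/-- Let `p₁, …, p_l` be distinct primes, each `≡ 3 (mod 4)`, let `ζ_{p_i} ∈ ℂ` be a
primitive `p_i`-th root of unity, and let `k = ℚ(ζ_{p₁} + ζ_{p₁}⁻¹, …, ζ_{p_l} + ζ_{p_l}⁻¹)`.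
Let `A_i` be the quaternion algebra `((ζ_{p_i} − ζ_{p_i}⁻¹)², −1)` over `k`.  Then the
Brauer classes of `A₁, …, A_l` are linearly independent over `ℤ/2ℤ`: for every nonempty
subset `S` of the indices, the tensor product `⊗_{i ∈ S} A_i` over `k` is not isomorphic
to a matrix algebra over `k`. -/
theorem quaternion_classes_independent
    (l : ℕ) (p : Fin l → ℕ)
    (hp : ∀ i, Nat.Prime (p i)) (hp3 : ∀ i, p i % 4 = 3)
    (hdist : Function.Injective p)
    (ζ : Fin l → ℂ) (hζ : ∀ i, IsPrimitiveRoot (ζ i) (p i))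
    (k : IntermediateField ℚ ℂ)
    (hk : k = IntermediateField.adjoin ℚ (Set.range fun i => ζ i + (ζ i)⁻¹))
    (a : Fin l → k) (ha : ∀ i, (a i : ℂ) = (ζ i - (ζ i)⁻¹) ^ 2) :
    ∀ S : Finset (Fin l), S.Nonempty →
      ¬ ∃ m : ℕ, Nonempty
        ((⨂[k] i : {x // x ∈ S}, ℍ[k, a i.1, -1]) ≃ₐ[k] Matrix (Fin m) (Fin m) k) := by
  classical
  rintro S ⟨j0, hj0⟩ ⟨m, ⟨e⟩⟩
  have hp2 : ∀ i, p i ≠ 2 := fun i h => by have := hp3 i; rw [h] at this; simp at this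
  have hreal : ∀ x ∈ k, x.im = 0 := by
    rw [hk]
    apply qci_real_adjoin
    rintro _ ⟨i, rfl⟩
    exact (qci_prim_im (p i) (hp i) (hp2 i) (ζ i) (hζ i)).2
  have ha0 : ∀ i, a i ≠ 0 := by
    intro i h
    obtain ⟨h1, h2⟩ := qci_prim_im (p i) (hp i) (hp2 i) (ζ i) (hζ i)
    have h3 := ha i
    rw [h] at h3
    have h4 : ζ i - (ζ i)⁻¹ = 0 := by
      have h5 : (ζ i - (ζ i)⁻¹) ^ 2 = 0 := by rw [← h3]; rfl
      exact pow_eq_zero_iff two_ne_zero |>.1 h5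
    rw [← sub_eq_zero.1 h4, Complex.add_im] at h2
    exact h1 (by linarith)
  have hm1 : ∀ c : k, c * c ≠ -1 := by
    intro c hc
    have h1 : (c : ℂ) * c = -1 := by exact_mod_cast congrArg Subtype.val hc
    have h2 := congrArg Complex.re h1
    rw [Complex.mul_re, hreal c c.2] at h2
    simp at h2
    nlinarith [mul_self_nonneg (c : ℂ).re]
  obtain ⟨c, d, hcd⟩ := qci_tensor (k := k) (ι := {x // x ∈ S}) two_ne_zero hm1 (fun i => a i.1)
    (fun i => ha0 i.1) ⟨j0, hj0⟩ m e
  rw [Finset.prod_coe_sort S a] at hcd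
  exact qci_final p hp hp3 hdist ζ hζ k hk a ha hreal S ⟨j0, hj0⟩ c d hcd
end

section
/- Let k be a field of characteristic 0 with algebraic closure k̄, let G be a finite group, and let V and W be finite-dimensional representations of G over k̄ whose characters χ_V and χ_W take all their values in k and which have no common irreducible constituent (equivalently, the standard inner product ⟨χ_V, χ_W⟩ = (1/|G|) Σ_{g∈G} χ_V(g) χ_W(g^{-1}) is 0). Then for every field extension K/k: the class function χ_V + χ_W is the character of a representation of G over K if and only if both χ_V and χ_W are characters of representations of G over K. -/
open Matrix

/-- The character of a matrix representation. -/
noncomputable def repChar {G F : Type*} [Group G] [Field F] {n : ℕ}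
    (ρ : G →* GL (Fin n) F) (g : G) : F :=
  Matrix.trace (ρ g : Matrix (Fin n) (Fin n) F)

/-- A `k`-valued class function `χ` on `G` is the character of a representation of `G`
over a field extension `K` of `k` if there is a finite-dimensional matrix representation
of `G` over `K` whose character is `χ` composed with the inclusion `k ⊆ K`. -/
def IsCharacterOver {k : Type*} [Field k] {G : Type*} [Group G] (χ : G → k)
    (K : Type*) [Field K] [Algebra k K] : Prop :=
  ∃ (m : ℕ) (τ : G →* GL (Fin m) K), ∀ g, repChar τ g = algebraMap k K (χ g)

namespace SumChar

section A
variable {k : Type*} [Field k] {G : Type*} [Group G] [Fintype G]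

/-- Linear extension of a function on `G` to the group algebra. -/
noncomputable def phi (χ : G → k) : MonoidAlgebra k G →ₗ[k] k where
  toFun a := ∑ h, a.coeff h * χ h
  map_add' a b := by simp [add_mul, Finset.sum_add_distrib]
  map_smul' r a := by simp [mul_assoc, Finset.mul_sum]

lemma phi_single (χ : G → k) (g : G) (r : k) :
    phi χ (MonoidAlgebra.single g r) = r * χ g := by
  classical
  simp [phi, MonoidAlgebra.coeff_single, Finsupp.single_apply]

/-- The algebra map to matrices. -/
noncomputable def T {K : Type*} [Field K] [Algebra k K] {m : ℕ} (τ : G →* GL (Fin m) K) :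
    MonoidAlgebra k G →ₐ[k] Matrix (Fin m) (Fin m) K :=
  MonoidAlgebra.lift k _ G ((Units.coeHom _).comp τ)

lemma T_single {K : Type*} [Field K] [Algebra k K] {m : ℕ} (τ : G →* GL (Fin m) K)
    (g : G) (r : k) : T τ (MonoidAlgebra.single g r) = r • (τ g : Matrix (Fin m) (Fin m) K) := by
  simp [T, MonoidAlgebra.lift_single]

lemma trace_T {K : Type*} [Field K] [Algebra k K] {m : ℕ} (τ : G →* GL (Fin m) K)
    (χ : G → k) (h : ∀ g, repChar τ g = algebraMap k K (χ g)) (a : MonoidAlgebra k G) :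
    Matrix.trace (T τ a) = algebraMap k K (phi χ a) := by
  induction a using MonoidAlgebra.induction_linear with
  | zero => simp
  | add a b ha hb => simp [ha, hb]
  | single g r =>
    rw [T_single, phi_single, Matrix.trace_smul, map_mul, ← h, Algebra.smul_def]
    rfl

lemma phi_comm {K : Type*} [Field K] [Algebra k K] {m : ℕ} (τ : G →* GL (Fin m) K)
    (χ : G → k) (h : ∀ g, repChar τ g = algebraMap k K (χ g)) (a b : MonoidAlgebra k G) :
    phi χ (a * b) = phi χ (b * a) := by
  apply (algebraMap k K).injective
  rw [← trace_T τ χ h, ← trace_T τ χ h, map_mul, map_mul, Matrix.trace_mul_comm]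

/-- The central element attached to a class function. -/
noncomputable def cen (χ : G → k) : MonoidAlgebra k G :=
  ∑ g, MonoidAlgebra.single g (χ g⁻¹)

lemma cen_coeff (χ : G → k) (g : G) : (cen χ).coeff g = χ g⁻¹ := by
  classical
  simp [cen, MonoidAlgebra.coeff_sum, MonoidAlgebra.coeff_single, Finsupp.single_apply]

lemma cen_comm (χ : G → k) (h : ∀ a b, phi χ (a * b) = phi χ (b * a)) (a : MonoidAlgebra k G) :
    cen χ * a = a * cen χ := by
  induction a using MonoidAlgebra.induction_linear with
  | zero => simp
  | add a b ha hb => rw [mul_add, add_mul, ha, hb]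
  | single g r =>
    ext x
    have := h (MonoidAlgebra.single g 1) (MonoidAlgebra.single x⁻¹ 1)
    rw [MonoidAlgebra.single_mul_single, MonoidAlgebra.single_mul_single, phi_single,
      phi_single] at this
    simp only [one_mul] at this
    simp [cen_coeff, this, mul_comm]

lemma cen_coeff_one (χ : G → k) (a : MonoidAlgebra k G) : (cen χ * a).coeff 1 = phi χ a := by
  induction a using MonoidAlgebra.induction_linear with
  | zero => simp
  | add a b ha hb => rw [mul_add, map_add, ← ha, ← hb]; simp
  | single g r =>
    rw [phi_single]
    simp [cen_coeff, mul_comm]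

lemma exists_idem [CharZero k] (c : MonoidAlgebra k G) (hc : ∀ a, c * a = a * c) :
    ∃ e y : MonoidAlgebra k G, e * e = e ∧ (∀ a, e * a = a * e) ∧ e = c * y ∧
      c * (1 - e) = 0 := by
  haveI : NeZero (Nat.card G : k) := ⟨by simp⟩
  obtain ⟨e, he, hI⟩ := IsSemisimpleRing.ideal_eq_span_idempotent (Ideal.span {c})
  obtain ⟨y, hy⟩ := Ideal.mem_span_singleton'.1 (hI ▸ Ideal.mem_span_singleton_self e : e ∈ Ideal.span {c})
  obtain ⟨x, hx⟩ := Ideal.mem_span_singleton'.1 (hI ▸ Ideal.mem_span_singleton_self c : c ∈ Ideal.span {e})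
  have he' : e * e = e := he
  have hce : c * (1 - e) = 0 := by
    rw [mul_sub, mul_one, ← hx, mul_assoc, he', sub_self]
  have hce' : (1 - e) * c = 0 := by rw [← hc, hce]
  refine ⟨e, y, he', fun a => ?_, by rw [hc, hy], hce⟩
  have h1 : (1 - e) * (a * e) = 0 := by
    have hae : a * e = c * (a * y) := by rw [← hy, hc, mul_assoc]
    rw [hae, ← mul_assoc, hce', zero_mul]
  have h2 : e * a * (1 - e) = 0 := by
    have hae : e * a = y * a * c := by rw [← hy, mul_assoc, hc, mul_assoc]
    rw [hae, mul_assoc, hce, mul_zero]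
  rw [sub_mul, one_mul, sub_eq_zero] at h1
  rw [mul_sub, mul_one, sub_eq_zero] at h2
  rw [h2, h1, mul_assoc]

end A

section B
variable {F : Type*} [Field F] {G : Type*} [Group G]

lemma idem_factor {m : ℕ} (E : Matrix (Fin m) (Fin m) F) (hE : E * E = E) :
    ∃ (r : ℕ) (A : Matrix (Fin r) (Fin m) F) (B : Matrix (Fin m) (Fin r) F),
      B * A = E ∧ A * B = 1 := by
  let f := Matrix.toLin' E
  let b := Module.finBasis F (LinearMap.range f)
  let s := Pi.basisFun F (Fin m)
  refine ⟨_, LinearMap.toMatrix s b f.rangeRestrict,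
    LinearMap.toMatrix b s (LinearMap.range f).subtype, ?_, ?_⟩
  · rw [← LinearMap.toMatrix_comp]
    have : (LinearMap.range f).subtype ∘ₗ f.rangeRestrict = f := by ext; rfl
    rw [this, LinearMap.toMatrix_eq_toMatrix', LinearMap.toMatrix'_toLin']
  · rw [← LinearMap.toMatrix_comp]
    have : f.rangeRestrict ∘ₗ (LinearMap.range f).subtype = LinearMap.id := by
      ext ⟨x, y, rfl⟩ : 2
      simp [f, hE, LinearMap.rangeRestrict]
    rw [this, LinearMap.toMatrix_id]

lemma cut {m : ℕ} (τ : G →* GL (Fin m) F) (E : Matrix (Fin m) (Fin m) F) (hE : E * E = E)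
    (hc : ∀ g, E * (τ g : Matrix (Fin m) (Fin m) F) = τ g * E) :
    ∃ (r : ℕ) (σ : G →* GL (Fin r) F), ∀ g, repChar σ g = Matrix.trace (E * (τ g : Matrix (Fin m) (Fin m) F)) := by
  obtain ⟨r, A, B, hBA, hAB⟩ := idem_factor E hE
  let σ : G →* Matrix (Fin r) (Fin r) F :=
    { toFun := fun g => A * (τ g : Matrix (Fin m) (Fin m) F) * B
      map_one' := by simp [hAB]
      map_mul' := fun g h => by
        have hEB : E * B = B := by rw [← hBA, Matrix.mul_assoc, hAB, Matrix.mul_one]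
        calc A * ((τ (g * h) : GL (Fin m) F) : Matrix (Fin m) (Fin m) F) * B
            = A * (τ g : Matrix (Fin m) (Fin m) F) * ((τ h : Matrix (Fin m) (Fin m) F) * (E * B)) := by
              rw [hEB, map_mul, Units.val_mul]; simp only [Matrix.mul_assoc]
          _ = A * (τ g : Matrix (Fin m) (Fin m) F) * ((E * (τ h : Matrix (Fin m) (Fin m) F)) * B) := by rw [hc]; simp only [Matrix.mul_assoc]
          _ = _ := by rw [← hBA]; simp only [Matrix.mul_assoc] }
  refine ⟨r, σ.toHomUnits, fun g => ?_⟩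
  change Matrix.trace (A * (τ g : Matrix (Fin m) (Fin m) F) * B) = _
  rw [Matrix.trace_mul_comm, ← Matrix.mul_assoc, hBA]

lemma direct_sum {m n : ℕ} (τ : G →* GL (Fin m) F) (σ : G →* GL (Fin n) F) :
    ∃ (r : ℕ) (ω : G →* GL (Fin r) F), ∀ g, repChar ω g = repChar τ g + repChar σ g := by
  let ω : G →* Matrix (Fin (m + n)) (Fin (m + n)) F :=
    { toFun := fun g => Matrix.reindexAlgEquiv F F finSumFinEquiv
        (Matrix.fromBlocks (τ g : Matrix (Fin m) (Fin m) F) 0 0 (σ g : Matrix (Fin n) (Fin n) F))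
      map_one' := by simp
      map_mul' := fun g h => by
        rw [← map_mul, Matrix.fromBlocks_multiply]; simp }
  refine ⟨m + n, ω.toHomUnits, fun g => ?_⟩
  change Matrix.trace (Matrix.reindexAlgEquiv F F finSumFinEquiv _) = _
  simp [repChar, Matrix.trace, Fin.sum_univ_add]

end B

section C
variable {F : Type*} [Field F] {G : Type*} [Group G] [Fintype G]

/-- The averaging operator. -/
noncomputable def avg {m n : ℕ} (ρ : G →* GL (Fin m) F) (σ : G →* GL (Fin n) F) :
    Matrix (Fin m) (Fin n) F →ₗ[F] Matrix (Fin m) (Fin n) F where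
  toFun M := (Nat.card G : F)⁻¹ • ∑ g, (ρ g : Matrix (Fin m) (Fin m) F) * M *
    (σ g⁻¹ : Matrix (Fin n) (Fin n) F)
  map_add' M N := by simp only [Matrix.mul_add, Matrix.add_mul, Finset.sum_add_distrib, smul_add]
  map_smul' r M := by
    simp only [Matrix.mul_smul, Matrix.smul_mul, ← Finset.smul_sum, RingHom.id_apply]
    rw [smul_comm]

lemma avg_fix {m n : ℕ} (ρ : G →* GL (Fin m) F) (σ : G →* GL (Fin n) F)
    (M : Matrix (Fin m) (Fin n) F) (h : G) :
    (ρ h : Matrix (Fin m) (Fin m) F) * avg ρ σ M * (σ h⁻¹ : Matrix (Fin n) (Fin n) F)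
      = avg ρ σ M := by
  simp only [avg, LinearMap.coe_mk, AddHom.coe_mk, Matrix.mul_smul, Matrix.smul_mul,
    Matrix.mul_sum, Matrix.sum_mul]
  congr 1
  refine Fintype.sum_equiv (Equiv.mulLeft h) _ _ fun g => ?_
  simp only [Equiv.coe_mulLeft, _root_.mul_inv_rev, map_mul, Units.val_mul, Matrix.mul_assoc]

lemma avg_idem [CharZero F] {m n : ℕ} (ρ : G →* GL (Fin m) F) (σ : G →* GL (Fin n) F) :
    IsIdempotentElem (avg ρ σ) := by
  refine LinearMap.ext fun M => ?_
  change avg ρ σ (avg ρ σ M) = avg ρ σ M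
  have : avg ρ σ (avg ρ σ M) = (Nat.card G : F)⁻¹ • ∑ g, (ρ g : Matrix (Fin m) (Fin m) F) *
    avg ρ σ M * (σ g⁻¹ : Matrix (Fin n) (Fin n) F) := rfl
  rw [this]
  simp only [avg_fix]
  rw [Finset.sum_const, Finset.card_univ, ← Nat.card_eq_fintype_card, ← Nat.cast_smul_eq_nsmul F,
    smul_smul, inv_mul_cancel₀ (by simp), one_smul]

lemma avg_trace {m n : ℕ} (ρ : G →* GL (Fin m) F) (σ : G →* GL (Fin n) F) :
    LinearMap.trace F _ (avg ρ σ) = (Nat.card G : F)⁻¹ * ∑ g, repChar ρ g * repChar σ g⁻¹ := by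
  rw [LinearMap.trace_eq_matrix_trace F (Matrix.stdBasis F (Fin m) (Fin n)), Matrix.trace,
    Fintype.sum_prod_type]
  have : ∀ i j, (LinearMap.toMatrix (Matrix.stdBasis F (Fin m) (Fin n))
      (Matrix.stdBasis F (Fin m) (Fin n)) (avg ρ σ)).diag (i, j) =
      (Nat.card G : F)⁻¹ * ∑ g, (ρ g : Matrix (Fin m) (Fin m) F) i i *
        (σ g⁻¹ : Matrix (Fin n) (Fin n) F) j j := by
    intro i j
    rw [Matrix.diag_apply, LinearMap.toMatrix_apply, Matrix.stdBasis_eq_single]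
    have hr : ∀ M : Matrix (Fin m) (Fin n) F,
      (Matrix.stdBasis F (Fin m) (Fin n)).repr M (i, j) = M i j := fun M => by
        simp [Matrix.stdBasis]
    rw [hr]
    simp [avg, Matrix.sum_apply, Matrix.mul_apply, Matrix.single_apply, ite_and]
  simp only [this, repChar, Matrix.trace, Matrix.diag_apply]
  simp only [← Finset.mul_sum]
  congr 1
  simp only [Finset.sum_mul_sum]
  rw [Finset.sum_comm]
  refine (Finset.sum_congr rfl fun j _ => Finset.sum_comm).trans ?_
  rw [Finset.sum_comm]
  exact Finset.sum_congr rfl fun g _ => Finset.sum_comm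

lemma conv_zero [CharZero F] {m n : ℕ} (ρ : G →* GL (Fin m) F) (σ : G →* GL (Fin n) F)
    (h0 : ∑ g, repChar ρ g * repChar σ g⁻¹ = 0) (h : G) :
    ∑ g, repChar ρ g⁻¹ * repChar σ (g * h) = 0 := by
  have hz : avg ρ σ = 0 := by
    apply LinearMap.IsIdempotentElem.eq_zero_of_trace_eq_zero (avg_idem ρ σ)
    rw [avg_trace, h0, mul_zero]
  have key : ∀ i j l, ∑ g, (ρ g⁻¹ : Matrix (Fin m) (Fin m) F) i i *
      (σ g : Matrix (Fin n) (Fin n) F) j l = 0 := by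
    intro i j l
    have := congrFun (congrFun (LinearMap.congr_fun hz (Matrix.single i j 1)) i) l
    have h2 : (Nat.card G : F)⁻¹ * ∑ g, (ρ g : Matrix (Fin m) (Fin m) F) i i *
        (σ g⁻¹ : Matrix (Fin n) (Fin n) F) j l = 0 := by
      rw [← show avg ρ σ (Matrix.single i j 1) i l = 0 from this]
      simp [avg, Matrix.sum_apply, Matrix.mul_apply, Matrix.single_apply, ite_and]
    rw [mul_eq_zero, or_iff_right (by simp)] at h2
    rw [← h2]
    refine Fintype.sum_equiv (Equiv.inv G) _ _ fun g => by simp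
  calc ∑ g, repChar ρ g⁻¹ * repChar σ (g * h)
      = ∑ g, ∑ i, ∑ j, ∑ l, ((ρ g⁻¹ : Matrix (Fin m) (Fin m) F) i i *
      (σ g : Matrix (Fin n) (Fin n) F) j l) * (σ h : Matrix (Fin n) (Fin n) F) l j := by
        refine Finset.sum_congr rfl fun g _ => ?_
        simp only [repChar, map_mul, Units.val_mul, Matrix.trace, Matrix.diag_apply,
          Matrix.mul_apply, Finset.sum_mul, Finset.mul_sum, mul_assoc]
        exact (Finset.sum_congr rfl fun x _ => Finset.sum_comm).trans Finset.sum_comm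
    _ = ∑ i, ∑ j, ∑ l, (∑ g, (ρ g⁻¹ : Matrix (Fin m) (Fin m) F) i i *
      (σ g : Matrix (Fin n) (Fin n) F) j l) * (σ h : Matrix (Fin n) (Fin n) F) l j := by
        rw [Finset.sum_comm]
        refine Finset.sum_congr rfl fun i _ => ?_
        rw [Finset.sum_comm]
        refine Finset.sum_congr rfl fun j _ => ?_
        rw [Finset.sum_comm]
        simp only [Finset.sum_mul]
    _ = 0 := by simp only [key, zero_mul, Finset.sum_const_zero]

end C

lemma cutOver {k : Type*} [Field k] {G : Type*} [Group G] [Fintype G] (χ : G → k)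
    (K : Type*) [Field K] [Algebra k K] (h : IsCharacterOver χ K) (e : MonoidAlgebra k G)
    (he : e * e = e) (hc : ∀ a, e * a = a * e) (ψ : G → k)
    (hψ : ∀ g, phi χ (e * MonoidAlgebra.single g 1) = ψ g) : IsCharacterOver ψ K := by
  obtain ⟨m, τ, hτ⟩ := h
  have hs : ∀ g, (τ g : Matrix (Fin m) (Fin m) K) = T τ (MonoidAlgebra.single g (1 : k)) := by
    intro g; rw [T_single, one_smul]
  obtain ⟨r, σ, hσ⟩ := cut τ (T τ e) (by rw [← map_mul, he])
    (fun g => by rw [hs, ← map_mul, hc, map_mul])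
  refine ⟨r, σ, fun g => ?_⟩
  rw [hσ, hs, ← map_mul, trace_T τ χ hτ, hψ]

lemma phi_add {k : Type*} [Field k] {G : Type*} [Group G] [Fintype G] (χ ψ : G → k)
    (a : MonoidAlgebra k G) : phi (fun g => χ g + ψ g) a = phi χ a + phi ψ a := by
  simp [phi, mul_add, Finset.sum_add_distrib]

end SumChar

open SumChar in
theorem sum_character_realizable_iff {k : Type*} [Field k] [CharZero k]
    {G : Type*} [Group G] [Fintype G]
    {nV nW : ℕ}
    (ρV : G →* GL (Fin nV) (AlgebraicClosure k))
    (ρW : G →* GL (Fin nW) (AlgebraicClosure k))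
    (χV χW : G → k)
    (hV : ∀ g, repChar ρV g = algebraMap k (AlgebraicClosure k) (χV g))
    (hW : ∀ g, repChar ρW g = algebraMap k (AlgebraicClosure k) (χW g))
    (hdisj : (1 / (Nat.card G : k)) * ∑ g : G, χV g * χW g⁻¹ = 0) :
    ∀ (K : Type*) [Field K] [Algebra k K],
      IsCharacterOver (fun g => χV g + χW g) K ↔
        (IsCharacterOver χV K ∧ IsCharacterOver χW K) := by
  intro K _ _
  constructor
  swap
  · rintro ⟨⟨m, τ, hτ⟩, n, σ, hσ⟩
    obtain ⟨r, ω, hω⟩ := direct_sum τ σ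
    exact ⟨r, ω, fun g => by rw [hω, hτ, hσ, map_add]⟩
  intro h
  haveI : CharZero (AlgebraicClosure k) :=
    charZero_of_injective_algebraMap (algebraMap k (AlgebraicClosure k)).injective
  have h0 : ∑ g : G, χV g * χW g⁻¹ = 0 := by
    rcases mul_eq_zero.1 hdisj with h | h
    · simp at h
    · exact h
  have hconv : ∀ x, ∑ g, χV g⁻¹ * χW (g * x) = 0 := by
    intro x
    apply (algebraMap k (AlgebraicClosure k)).injective
    have := conv_zero ρV ρW (by
      simp only [hV, hW, ← map_mul, ← map_sum, h0, map_zero]) x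
    simpa only [hV, hW, ← map_mul, ← map_sum, map_zero] using this
  have hcW : ∀ a, phi χW (cen χV * a) = 0 := by
    intro a
    induction a using MonoidAlgebra.induction_linear with
    | zero => simp
    | add a b ha hb => rw [mul_add, map_add, ha, hb, add_zero]
    | single x r =>
      have : phi χW (cen χV * MonoidAlgebra.single x r) = r * ∑ g, χV g⁻¹ * χW (g * x) := by
        rw [cen, Finset.sum_mul, map_sum, Finset.mul_sum]
        refine Finset.sum_congr rfl fun g _ => ?_
        rw [MonoidAlgebra.single_mul_single, phi_single]
        ring
      rw [this, hconv, mul_zero]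
  obtain ⟨e, y, he, hec, hey, hce⟩ := exists_idem (cen χV)
    (cen_comm χV (phi_comm ρV χV hV))
  have hWe : ∀ a, phi χW (e * a) = 0 := fun a => by rw [hey, mul_assoc, hcW]
  have hVe : ∀ a, phi χV ((1 - e) * a) = 0 := fun a => by
    rw [← cen_coeff_one, ← mul_assoc, hce, zero_mul]; simp
  have hVe' : ∀ a, phi χV (e * a) = phi χV a := fun a => by
    have := hVe a
    rw [sub_mul, one_mul, map_sub, sub_eq_zero] at this
    exact this.symm
  constructor
  · refine cutOver _ K h e he hec _ fun g => ?_
    rw [phi_add, hWe, hVe', phi_single, one_mul, add_zero]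
  · refine cutOver _ K h (1 - e) ?_ (fun a => ?_) _ fun g => ?_
    · rw [sub_mul, mul_sub, mul_sub, he]; simp
    · rw [sub_mul, mul_sub, hec]; simp
    · rw [phi_add, hVe, sub_mul, map_sub, hWe, one_mul, phi_single, one_mul, zero_add, sub_zero]
end
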